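/- arXiv:1009.1123 — 11 statements merged into one kernel-verified Lean document; each statement's English description precedes it below -/
import Mathlib

section
/- Any finite-dimensional reductive Lie algebra over a field of characteristic zero (i.e. a Lie algebra l decomposing as l = c ⊕ l^s, the direct sum of its center c and a semisimple ideal l^s) which admits a symplectic form (a nondegenerate closed 2-form) is abelian, i.e. l^s = 0. -/
/-- Any finite-dimensional reductive Lie algebra over a field of
characteristic zero (i.e. a Lie algebra `L` decomposing as the direct sum of its
center and a semisimple ideal `s`) which admits a symplectic form (a nondegenerate
closed alternating 2-form) is abelian, i.e. the semisimple ideal `s` is zero. -/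
theorem reductive_symplectic_is_abelian
    {F L : Type*} [Field F] [CharZero F]
    [LieRing L] [LieAlgebra F L] [FiniteDimensional F L]
    (s : LieIdeal F L) [LieAlgebra.IsSemisimple F s]
    (hreductive : IsCompl (LieAlgebra.center F L).toSubmodule s.toSubmodule)
    (ω : L →ₗ[F] L →ₗ[F] F)
    (halt : ∀ x : L, ω x x = 0)
    (hclosed : ∀ x y z : L, ω x ⁅y, z⁆ + ω z ⁅x, y⁆ + ω y ⁅z, x⁆ = 0)
    (hnondeg : ∀ x : L, (∀ y : L, ω x y = 0) → x = 0) :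
    s = ⊥ ∧ IsLieAbelian L := by
  have hskew : ∀ x y : L, ω x y = - ω y x := by
    intro x y
    have := halt (x + y)
    simp only [map_add, LinearMap.add_apply, halt] at this
    linear_combination this
  have hfin : FiniteDimensional F s := inferInstanceAs (FiniteDimensional F s.toSubmodule)
  have hK : LieAlgebra.IsKilling F s := inferInstance
  set K : LinearMap.BilinForm F s := killingForm F s with hKdef
  have hnd : K.Nondegenerate := LieAlgebra.IsKilling.killingForm_nondegenerate F s
  have hzero : ∀ t : s, (∀ y, K t y = 0) → t = 0 := fun t ht => hnd.1 t ht
  have hinv : ∀ x y z : s, K ⁅x, y⁆ z = K x ⁅y, z⁆ := fun x y z =>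
    LieModule.traceForm_apply_lie_apply F s s x y z
  -- a central element is orthogonal to `s`
  have hcen : ∀ c ∈ LieAlgebra.center F L, ∀ y : s, ω c y = 0 := by
    intro c hc
    have hc1 : ∀ u : L, ⁅u, c⁆ = 0 := hc
    have hc2 : ∀ u : L, ⁅c, u⁆ = 0 := fun u => by rw [← lie_skew, hc1, neg_zero]
    let f : Module.Dual F s := (ω c).comp s.toSubmodule.subtype
    let t : s := (K.toDual hnd).symm f
    have ht : ∀ y : s, K t y = ω c y := fun y =>
      LinearMap.BilinForm.apply_toDual_symm_apply (hB := hnd) f y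
    have ht0 : t = 0 := by
      have hcent : t ∈ LieAlgebra.center F s := by
        intro u
        rw [← lie_skew, neg_eq_zero]
        apply hzero
        intro v
        rw [hinv, ht]
        have := hclosed c u v
        rw [hc1, hc2] at this
        simpa using this
      simpa using hcent
    intro y
    rw [← ht, ht0]
    simp
  -- `ω` on `s` is given by a derivation
  let g : s →ₗ[F] Module.Dual F s :=
    (LinearMap.lcomp F F s.toSubmodule.subtype) ∘ₗ ω ∘ₗ s.toSubmodule.subtype
  let D₀ : s →ₗ[F] s := (K.toDual hnd).symm.toLinearMap ∘ₗ g
  have hD₀ : ∀ x y : s, K (D₀ x) y = ω x y := fun x y =>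
    LinearMap.BilinForm.apply_toDual_symm_apply (hB := hnd) (g x) y
  let D : LieDerivation F s s :=
    { toLinearMap := D₀
      leibniz' := by
        intro x y
        rw [← sub_eq_zero]
        apply hzero
        intro z
        have e1 := hclosed x y z
        have e2 := hskew ⁅(x : L), (y : L)⁆ z
        have a1 : K (D₀ ⁅x, y⁆) z = ω ⁅(x : L), (y : L)⁆ z := hD₀ ⁅x, y⁆ z
        have a2 : K ⁅y, D₀ x⁆ z = - ω x ⁅(y : L), (z : L)⁆ := by
          rw [← lie_skew, map_neg, LinearMap.neg_apply, hinv]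
          exact congrArg Neg.neg (hD₀ x ⁅y, z⁆)
        have a3 : K ⁅x, D₀ y⁆ z = ω y ⁅(z : L), (x : L)⁆ := by
          rw [← lie_skew, map_neg, LinearMap.neg_apply, hinv, ← map_neg, lie_skew]
          exact hD₀ y ⁅z, x⁆
        rw [map_sub, map_sub, LinearMap.sub_apply, LinearMap.sub_apply]
        linear_combination a1 - a3 + a2 + e2 - e1 }
  obtain ⟨h, hh⟩ := LieDerivation.IsKilling.exists_eq_ad D
  have hD : ∀ x : s, D₀ x = ⁅h, x⁆ := fun x => by
    have : D x = ⁅h, x⁆ := by rw [← hh]; simp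
    exact this
  have key : ∀ x : s, (∀ y : s, ω x y = 0) → x = 0 := by
    intro x hx
    apply Subtype.ext
    apply hnondeg
    intro y
    have hy : y ∈ (LieAlgebra.center F L).toSubmodule ⊔ s.toSubmodule := by
      rw [hreductive.sup_eq_top]; trivial
    obtain ⟨c, hc, w, hw, rfl⟩ := Submodule.mem_sup.1 hy
    rw [map_add, hskew, hcen c hc x, hx ⟨w, hw⟩]
    simp
  have hh0 : h = 0 := by
    apply key
    intro y
    rw [← hD₀, hD]
    simp
  have hs : s = ⊥ := by
    rw [eq_bot_iff]
    intro x hx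
    have : (⟨x, hx⟩ : s) = 0 := by
      apply key
      intro y
      rw [← hD₀, hD, hh0]
      simp
    simpa using congrArg Subtype.val this
  refine ⟨hs, ?_⟩
  rw [LieAlgebra.isLieAbelian_iff_center_eq_top F L]
  have := hreductive.sup_eq_top
  rw [hs] at this
  simpa using this
end

section
/- A nonzero finite-dimensional semisimple Lie algebra over a field of characteristic zero admits no symplectic form: if l is semisimple and ω is a nondegenerate closed 2-form on l, then l = 0. -/
/-- A nonzero finite-dimensional semisimple Lie algebra over a field
of characteristic zero admits no symplectic form: if `L` is semisimple and `ω` is a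
nondegenerate closed alternating 2-form on `L`, then `L = 0`. -/
theorem semisimple_no_symplectic
    {F L : Type*} [Field F] [CharZero F]
    [LieRing L] [LieAlgebra F L] [FiniteDimensional F L]
    [LieAlgebra.IsSemisimple F L]
    (ω : L →ₗ[F] L →ₗ[F] F)
    (halt : ∀ x : L, ω x x = 0)
    (hclosed : ∀ x y z : L, ω x ⁅y, z⁆ + ω z ⁅x, y⁆ + ω y ⁅z, x⁆ = 0)
    (hnondeg : ∀ x : L, (∀ y : L, ω x y = 0) → x = 0) :
    ∀ x : L, x = 0 := by
  have hs : ∀ x y, ω x y = - ω y x := by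
    intro x y
    have h := halt (x + y)
    simp only [map_add, LinearMap.add_apply, halt, zero_add, add_zero] at h
    linear_combination h
  have hK := LieAlgebra.IsKilling.killingForm_nondegenerate F L
  let D : L →ₗ[F] L := ((killingForm F L).toDual hK).symm.toLinearMap ∘ₗ ω
  have hD : ∀ x y, killingForm F L (D x) y = ω x y := by
    intro x y
    simp [D, LinearMap.BilinForm.apply_toDual_symm_apply]
  have hinv : ∀ x y z : L, killingForm F L ⁅x, y⁆ z = killingForm F L x ⁅y, z⁆ :=
    fun x y z => LieModule.traceForm_apply_lie_apply F L L x y z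
  let d : LieDerivation F L L :=
    { toLinearMap := D
      leibniz' := by
        intro x y
        rw [← sub_eq_zero]
        apply hK.1
        intro w
        rw [← lie_skew x (D y), ← lie_skew y (D x)]
        simp only [map_sub, map_neg, LinearMap.sub_apply, LinearMap.neg_apply, hinv, hD]
        have h1 := hclosed x y w
        rw [← lie_skew w x, map_neg] at h1
        rw [hs ⁅x, y⁆ w]
        linear_combination -h1 }
  obtain ⟨z, hz⟩ := LieDerivation.IsKilling.exists_eq_ad d
  have hDz : ∀ x, D x = ⁅z, x⁆ := by
    intro x
    have : d x = ⁅z, x⁆ := by rw [← hz]; simp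
    exact this
  have hz0 : z = 0 := by
    apply hnondeg
    intro y
    rw [← hD, hDz]
    simp
  intro x
  apply hnondeg
  intro y
  rw [← hD, hDz, hz0]
  simp
end

section
/- Let k be a Lie algebra over a field admitting a semidirect decomposition k = s ⊕ p (direct sum of vector spaces) into a Lie subalgebra s and a Lie ideal p. Decompose a 2-form ρ on k as ρ = ρ₀ + ρ₁ + ρ₂, where ρ₀ vanishes whenever one argument lies in p, ρ₁ vanishes whenever one argument lies in s, and ρ₂ vanishes on s × s and on p × p. Then ρ is closed if and only if: (1) the restriction of ρ₀ to s is a closed 2-form on s and the restriction of ρ₁ to p is a closed 2-form on p; and (2) for all s, s′ ∈ s and p, p′ ∈ p, one has ρ₂(s, [p, p′]) = ρ₁([s, p], p′) + ρ₁(p, [s, p′]) and ρ₂([s, s′], p) + ρ₂([s′, p], s) + ρ₂([p, s], s′) = 0. -/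
/-- Let `k = s ⊕ p` be a semidirect decomposition of a Lie algebra `k`
over a field into a subalgebra `s` and an ideal `p`. Decompose an (alternating) 2-form
`ρ = ρ₀ + ρ₁ + ρ₂` into its `s`-part `ρ₀` (vanishing whenever one argument lies in `p`),
its `p`-part `ρ₁` (vanishing whenever one argument lies in `s`) and its mixed part `ρ₂`
(vanishing on `s × s` and on `p × p`).  Then `ρ` is closed if and only if (1) the
restrictions of `ρ₀` to `s` and of `ρ₁` to `p` are closed, and (2) for all `a, a' ∈ s`
and `b, b' ∈ p`:
`ρ₂ a ⁅b, b'⁆ = ρ₁ ⁅a, b⁆ b' + ρ₁ b ⁅a, b'⁆` and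
`ρ₂ ⁅a, a'⁆ b + ρ₂ ⁅a', b⁆ a + ρ₂ ⁅b, a⁆ a' = 0`. -/
theorem closed_two_form_semidirect_decomposition
    {F K : Type*} [Field F] [LieRing K] [LieAlgebra F K]
    (s : LieSubalgebra F K) (p : LieIdeal F K)
    (hcompl : IsCompl s.toSubmodule p.toSubmodule)
    (ρ₀ ρ₁ ρ₂ : K →ₗ[F] K →ₗ[F] F)
    (halt₀ : ∀ x : K, ρ₀ x x = 0) (halt₁ : ∀ x : K, ρ₁ x x = 0)
    (halt₂ : ∀ x : K, ρ₂ x x = 0)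
    (hρ₀ : ∀ x y : K, x ∈ p ∨ y ∈ p → ρ₀ x y = 0)
    (hρ₁ : ∀ x y : K, x ∈ s ∨ y ∈ s → ρ₁ x y = 0)
    (hρ₂s : ∀ x y : K, x ∈ s → y ∈ s → ρ₂ x y = 0)
    (hρ₂p : ∀ x y : K, x ∈ p → y ∈ p → ρ₂ x y = 0)
    (ρ : K →ₗ[F] K →ₗ[F] F) (hρ : ρ = ρ₀ + ρ₁ + ρ₂) :
    (∀ x y z : K, ρ x ⁅y, z⁆ + ρ z ⁅x, y⁆ + ρ y ⁅z, x⁆ = 0)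
      ↔ ((∀ x ∈ s, ∀ y ∈ s, ∀ z ∈ s, ρ₀ x ⁅y, z⁆ + ρ₀ z ⁅x, y⁆ + ρ₀ y ⁅z, x⁆ = 0)
        ∧ (∀ x ∈ p, ∀ y ∈ p, ∀ z ∈ p, ρ₁ x ⁅y, z⁆ + ρ₁ z ⁅x, y⁆ + ρ₁ y ⁅z, x⁆ = 0)
        ∧ (∀ a ∈ s, ∀ b ∈ p, ∀ b' ∈ p, ρ₂ a ⁅b, b'⁆ = ρ₁ ⁅a, b⁆ b' + ρ₁ b ⁅a, b'⁆)
        ∧ (∀ a ∈ s, ∀ a' ∈ s, ∀ b ∈ p,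
            ρ₂ ⁅a, a'⁆ b + ρ₂ ⁅a', b⁆ a + ρ₂ ⁅b, a⁆ a' = 0)) := by
  have skew : ∀ (f : K →ₗ[F] K →ₗ[F] F), (∀ x, f x x = 0) → ∀ x y, f x y = - f y x := by
    intro f hf x y
    have h := hf (x + y)
    simp only [map_add, LinearMap.add_apply, hf] at h
    linear_combination h
  have pr : ∀ x y : K, y ∈ p → ⁅x, y⁆ ∈ p := fun x y h => lie_mem_right F K p x y h
  have pl : ∀ x y : K, x ∈ p → ⁅x, y⁆ ∈ p := fun x y h => lie_mem_left F K p x y h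
  have ev : ∀ x y, ρ x y = ρ₀ x y + ρ₁ x y + ρ₂ x y := by
    intro x y; rw [hρ]; rfl
  have sss : ∀ x ∈ s, ∀ y ∈ s, ∀ z ∈ s, ρ x ⁅y, z⁆ = ρ₀ x ⁅y, z⁆ := by
    intro x hx y hy z hz
    rw [ev, hρ₁ _ _ (Or.inl hx), hρ₂s _ _ hx (s.lie_mem hy hz)]; ring
  have pp : ∀ x ∈ p, ∀ y ∈ p, ρ x y = ρ₁ x y := by
    intro x hx y hy
    rw [ev, hρ₀ _ _ (Or.inl hx), hρ₂p _ _ hx hy]; ring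
  have sp : ∀ x ∈ s, ∀ y ∈ p, ρ x y = ρ₂ x y := by
    intro x hx y hy
    rw [ev, hρ₀ _ _ (Or.inr hy), hρ₁ _ _ (Or.inl hx)]; ring
  have ps : ∀ x ∈ p, ∀ y ∈ s, ρ x y = ρ₂ x y := by
    intro x hx y hy
    rw [ev, hρ₀ _ _ (Or.inl hx), hρ₁ _ _ (Or.inr hy)]; ring
  have Tspp : ∀ a ∈ s, ∀ b ∈ p, ∀ c ∈ p, ρ a ⁅b, c⁆ + ρ c ⁅a, b⁆ + ρ b ⁅c, a⁆
      = ρ₂ a ⁅b, c⁆ - (ρ₁ ⁅a, b⁆ c + ρ₁ b ⁅a, c⁆) := by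
    intro a ha b hb c hc
    rw [sp a ha _ (pr _ _ hc), pp c hc _ (pr _ _ hb), pp b hb _ (pl _ _ hc),
      skew ρ₁ halt₁ c, ← lie_skew c a, map_neg]
    ring
  have Tssp : ∀ a ∈ s, ∀ b ∈ s, ∀ c ∈ p, ρ a ⁅b, c⁆ + ρ c ⁅a, b⁆ + ρ b ⁅c, a⁆
      = - (ρ₂ ⁅a, b⁆ c + ρ₂ ⁅b, c⁆ a + ρ₂ ⁅c, a⁆ b) := by
    intro a ha b hb c hc
    rw [sp a ha _ (pr _ _ hc), ps c hc _ (s.lie_mem ha hb), sp b hb _ (pl _ _ hc),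
      skew ρ₂ halt₂ c, skew ρ₂ halt₂ a, skew ρ₂ halt₂ b]
    ring
  constructor
  · intro h
    refine ⟨?_, ?_, ?_, ?_⟩
    · intro x hx y hy z hz
      rw [← sss x hx y hy z hz, ← sss z hz x hx y hy, ← sss y hy z hz x hx]
      exact h x y z
    · intro x hx y hy z hz
      rw [← pp x hx _ (pr _ _ hz), ← pp z hz _ (pr _ _ hy), ← pp y hy _ (pr _ _ hx)]
      exact h x y z
    · intro a ha b hb c hc
      have := Tspp a ha b hb c hc
      rw [h] at this
      linear_combination -this
    · intro a ha b hb c hc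
      have := Tssp a ha b hb c hc
      rw [h] at this
      linear_combination this
  · rintro ⟨h0, h1, h2, h3⟩
    have A : ∀ x ∈ s, ∀ y ∈ s, ∀ z ∈ s, ρ x ⁅y, z⁆ + ρ z ⁅x, y⁆ + ρ y ⁅z, x⁆ = 0 := by
      intro x hx y hy z hz
      rw [sss x hx y hy z hz, sss z hz x hx y hy, sss y hy z hz x hx]
      exact h0 x hx y hy z hz
    have B : ∀ x ∈ p, ∀ y ∈ p, ∀ z ∈ p, ρ x ⁅y, z⁆ + ρ z ⁅x, y⁆ + ρ y ⁅z, x⁆ = 0 := by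
      intro x hx y hy z hz
      rw [pp x hx _ (pr _ _ hz), pp z hz _ (pr _ _ hy), pp y hy _ (pr _ _ hx)]
      exact h1 x hx y hy z hz
    have C : ∀ x ∈ s, ∀ y ∈ p, ∀ z ∈ p, ρ x ⁅y, z⁆ + ρ z ⁅x, y⁆ + ρ y ⁅z, x⁆ = 0 := by
      intro x hx y hy z hz
      rw [Tspp x hx y hy z hz, h2 x hx y hy z hz, sub_self]
    have D : ∀ x ∈ s, ∀ y ∈ s, ∀ z ∈ p, ρ x ⁅y, z⁆ + ρ z ⁅x, y⁆ + ρ y ⁅z, x⁆ = 0 := by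
      intro x hx y hy z hz
      rw [Tssp x hx y hy z hz, h3 x hx y hy z hz, neg_zero]
    have dec : ∀ x : K, ∃ a ∈ s, ∃ b ∈ p, a + b = x := by
      intro x
      have hx : x ∈ s.toSubmodule ⊔ p.toSubmodule := by
        rw [hcompl.sup_eq_top]; trivial
      obtain ⟨a, ha, b, hb, e⟩ := Submodule.mem_sup.1 hx
      exact ⟨a, ha, b, hb, e⟩
    intro x y z
    obtain ⟨a, ha, b, hb, rfl⟩ := dec x
    obtain ⟨c, hc, d, hd, rfl⟩ := dec y
    obtain ⟨e, he, f, hf, rfl⟩ := dec z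
    simp only [lie_add, add_lie, map_add, LinearMap.add_apply]
    linear_combination A a ha c hc e he + B b hb d hd f hf
      + C a ha d hd f hf + C c hc f hf b hb + C e he b hb d hd
      + D a ha c hc f hf + D c hc e he b hb + D e he a ha d hd
end

section
/- Let k be a Lie algebra over a field with semidirect decomposition k = s ⊕ p (s a Lie subalgebra, p a Lie ideal, direct sum of vector spaces), and let ρ = ρ₀ + ρ₁ be a 2-form on k with ρ₀ vanishing whenever one argument lies in p and ρ₁ vanishing whenever one argument lies in s (so s is ρ-orthogonal to p). Then ρ is closed if and only if the restriction of ρ₀ to s is closed, the restriction of ρ₁ to p is closed, and ρ₁ is ad_s-invariant, i.e. ρ₁([s, p], p′) + ρ₁(p, [s, p′]) = 0 for all s ∈ s and p, p′ ∈ p. -/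
/-- Let `k = s ⊕ p` be a semidirect decomposition of a Lie algebra `k`
over a field into a subalgebra `s` and an ideal `p`, and let `ρ = ρ₀ + ρ₁` be a 2-form
with `s`-part `ρ₀` (vanishing whenever one argument lies in `p`) and `p`-part `ρ₁`
(vanishing whenever one argument lies in `s`), i.e. `s` is `ρ`-orthogonal to `p`.
Then `ρ` is closed if and only if the restriction of `ρ₀` to `s` is closed, the
restriction of `ρ₁` to `p` is closed, and `ρ₁` is `ad s`-invariant:
`ρ₁ ⁅a, b⁆ b' + ρ₁ b ⁅a, b'⁆ = 0` for all `a ∈ s`, `b, b' ∈ p`. -/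
theorem closed_two_form_orthogonal_decomposition
    {F K : Type*} [Field F] [LieRing K] [LieAlgebra F K]
    (s : LieSubalgebra F K) (p : LieIdeal F K)
    (hcompl : IsCompl s.toSubmodule p.toSubmodule)
    (ρ₀ ρ₁ : K →ₗ[F] K →ₗ[F] F)
    (halt₀ : ∀ x : K, ρ₀ x x = 0) (halt₁ : ∀ x : K, ρ₁ x x = 0)
    (hρ₀ : ∀ x y : K, x ∈ p ∨ y ∈ p → ρ₀ x y = 0)
    (hρ₁ : ∀ x y : K, x ∈ s ∨ y ∈ s → ρ₁ x y = 0)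
    (ρ : K →ₗ[F] K →ₗ[F] F) (hρ : ρ = ρ₀ + ρ₁) :
    (∀ x y z : K, ρ x ⁅y, z⁆ + ρ z ⁅x, y⁆ + ρ y ⁅z, x⁆ = 0)
      ↔ ((∀ x ∈ s, ∀ y ∈ s, ∀ z ∈ s, ρ₀ x ⁅y, z⁆ + ρ₀ z ⁅x, y⁆ + ρ₀ y ⁅z, x⁆ = 0)
        ∧ (∀ x ∈ p, ∀ y ∈ p, ∀ z ∈ p, ρ₁ x ⁅y, z⁆ + ρ₁ z ⁅x, y⁆ + ρ₁ y ⁅z, x⁆ = 0)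
        ∧ (∀ a ∈ s, ∀ b ∈ p, ∀ b' ∈ p, ρ₁ ⁅a, b⁆ b' + ρ₁ b ⁅a, b'⁆ = 0)) := by
  subst hρ
  have skew₁ : ∀ x y : K, ρ₁ x y = - ρ₁ y x := by
    intro x y
    have h := halt₁ (x + y)
    simp only [map_add, LinearMap.add_apply, halt₁] at h
    linear_combination h
  have pr : ∀ (a b : K), b ∈ p → ⁅a, b⁆ ∈ p := fun a b hb => lie_mem_right F K p a b hb
  have pl : ∀ (a b : K), a ∈ p → ⁅a, b⁆ ∈ p := fun a b ha => lie_mem_left F K p a b ha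
  constructor
  · intro h
    refine ⟨?_, ?_, ?_⟩
    · intro x hx y hy z hz
      have e := h x y z
      simp only [LinearMap.add_apply] at e
      rw [hρ₁ x _ (Or.inl hx), hρ₁ y _ (Or.inl hy), hρ₁ z _ (Or.inl hz)] at e
      linear_combination e
    · intro x hx y hy z hz
      have e := h x y z
      simp only [LinearMap.add_apply] at e
      rw [hρ₀ x _ (Or.inl hx), hρ₀ y _ (Or.inl hy), hρ₀ z _ (Or.inl hz)] at e
      linear_combination e
    · intro a ha b hb b' hb'
      have e := h a b b'
      simp only [LinearMap.add_apply] at e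
      rw [hρ₀ a _ (Or.inr (pr _ _ hb')), hρ₀ b _ (Or.inl hb), hρ₀ b' _ (Or.inl hb'),
        hρ₁ a _ (Or.inl ha), ← lie_skew b' a, map_neg] at e
      rw [skew₁ ⁅a, b⁆ b']
      linear_combination -e
  · rintro ⟨h0, h1, h2⟩
    have inv : ∀ a ∈ s, ∀ b ∈ p, ∀ b' ∈ p, ρ₁ b' ⁅a, b⁆ + ρ₁ b ⁅b', a⁆ = 0 := by
      intro a ha b hb b' hb'
      have e := h2 a ha b hb b' hb'
      rw [skew₁ ⁅a, b⁆ b'] at e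
      rw [← lie_skew b' a, map_neg]
      linear_combination -e
    have dec : ∀ x : K, ∃ a ∈ s, ∃ b ∈ p, a + b = x := by
      intro x
      have hx : x ∈ s.toSubmodule ⊔ p.toSubmodule := by
        rw [hcompl.sup_eq_top]; trivial
      obtain ⟨a, ha, b, hb, e⟩ := Submodule.mem_sup.1 hx
      exact ⟨a, ha, b, hb, e⟩
    have key : ∀ a ∈ s, ∀ a' ∈ s, ∀ a'' ∈ s, ∀ b ∈ p, ∀ b' ∈ p, ∀ b'' ∈ p,
        (ρ₀ + ρ₁) (a + b) ⁅a' + b', a'' + b''⁆ =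
          ρ₀ a ⁅a', a''⁆ + ρ₁ b ⁅a', b''⁆ + ρ₁ b ⁅b', a''⁆ + ρ₁ b ⁅b', b''⁆ := by
      intro a ha a' ha' a'' ha'' b hb b' hb' b'' hb''
      simp only [LinearMap.add_apply, map_add, add_lie, lie_add]
      simp only [hρ₀ b _ (Or.inl hb), hρ₁ a _ (Or.inl ha),
        hρ₀ a _ (Or.inr (pr a' _ hb'')), hρ₀ a _ (Or.inr (pr b' _ hb'')),
        hρ₀ a _ (Or.inr (pl _ a'' hb')), hρ₁ b _ (Or.inr (s.lie_mem ha' ha''))]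
      ring
    intro x y z
    obtain ⟨x0, hx0, x1, hx1, rfl⟩ := dec x
    obtain ⟨y0, hy0, y1, hy1, rfl⟩ := dec y
    obtain ⟨z0, hz0, z1, hz1, rfl⟩ := dec z
    rw [key x0 hx0 y0 hy0 z0 hz0 x1 hx1 y1 hy1 z1 hz1,
      key z0 hz0 x0 hx0 y0 hy0 z1 hz1 x1 hx1 y1 hy1,
      key y0 hy0 z0 hz0 x0 hx0 y1 hy1 z1 hz1 x1 hx1]
    linear_combination h0 x0 hx0 y0 hy0 z0 hz0 + h1 x1 hx1 y1 hy1 z1 hz1 +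
      inv x0 hx0 y1 hy1 z1 hz1 + inv y0 hy0 z1 hz1 x1 hx1 + inv z0 hz0 x1 hx1 y1 hy1
end

section
/- Let g^ℂ be a finite-dimensional complex semisimple Lie algebra with Cartan subalgebra h, root system R, and a fixed Weyl basis {E_α}. Let R⁺ ⊂ R be a positive root system, h₀ ⊆ h a subspace, and k = h₀ ⊕ g(R⁺) the corresponding Lie subalgebra of g^ℂ. Assume that for every α ∈ R⁺ the restriction α|_{h₀} is not identically zero, and for all α, β ∈ R⁺ the restriction (α+β)|_{h₀} is not identically zero. Then a 2-form ω ∈ Λ²(k*) is closed if and only if there exist constants μ_α ∈ ℂ (α ∈ R⁺) and a 2-form ω̂₀ ∈ Λ²(h₀*) (trivially extended to k) such that ω = ω̂₀ + Σ_{α∈R⁺} μ_α α∧ω_α + (1/2) Σ_{α,β∈R⁺} μ_{α+β} N_{αβ} ω_α∧ω_β (where the term μ_{α+β}N_{αβ} is interpreted as 0 when α+β ∉ R). If moreover σ is an antilinear involutive automorphism of g^ℂ preserving h with σ(α) = −α for all α ∈ R and h₀ + σ(h₀) = h, and g := (g^ℂ)^σ, then (k, ω) is a g-admissible pair if and only if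 in addition Im(ω̂₀) is nondegenerate on l := h₀ ∩ σ(h₀) ∩ g. -/
/-- An antilinear involutive automorphism (a "conjugation") of a complex Lie
algebra; its fixed point set is a real form. -/
structure LieAntiInvolution (L : Type*) [LieRing L] [LieAlgebra ℂ L] where
  toFun : L → L
  map_add' : ∀ x y, toFun (x + y) = toFun x + toFun y
  map_smul' : ∀ (c : ℂ) (x), toFun (c • x) = (starRingEnd ℂ) c • toFun x
  map_lie' : ∀ x y, toFun ⁅x, y⁆ = ⁅toFun x, toFun y⁆
  invol : ∀ x, toFun (toFun x) = x

/-- The action of a conjugation `σ` on linear functionals: `σ(α) := conj ∘ α ∘ σ`. -/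
noncomputable def LieAntiInvolution.dualConj {L : Type*} [LieRing L] [LieAlgebra ℂ L]
    (σ : LieAntiInvolution L) (α : Module.Dual ℂ L) : Module.Dual ℂ L where
  toFun x := (starRingEnd ℂ) (α (σ.toFun x))
  map_add' x y := by simp only [σ.map_add', map_add]
  map_smul' c x := by
    simp only [σ.map_smul', map_smul, smul_eq_mul, map_mul, Complex.conj_conj,
      RingHom.id_apply]

open Finset
open scoped Classical

theorem bil_zero_on_span {V : Type*} [AddCommGroup V] [Module ℂ V]
    (B : V →ₗ[ℂ] V →ₗ[ℂ] ℂ) (S : Set V) (h : ∀ x ∈ S, ∀ y ∈ S, B x y = 0) :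
    ∀ x ∈ Submodule.span ℂ S, ∀ y ∈ Submodule.span ℂ S, B x y = 0 := by
  have h1 : ∀ x ∈ S, ∀ y ∈ Submodule.span ℂ S, B x y = 0 := by
    intro x hx y hy
    have : Submodule.span ℂ S ≤ LinearMap.ker (B x) :=
      Submodule.span_le.2 (fun z hz => h x hx z hz)
    exact this hy
  intro x hx y hy
  have : Submodule.span ℂ S ≤ LinearMap.ker (B.flip y) :=
    Submodule.span_le.2 (fun z hz => h1 z hz y hy)
  exact this hx

/-- **Theorem `main`.**  Let `gC` be a finite-dimensional complex
semisimple Lie algebra with Cartan subalgebra `H`, root system `R`, Weyl basis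
`{E α}` with structure constants `N`, dual covectors `ωc α`, a positive system
`Rpos ⊆ R` and a subspace `h₀ ⊆ H` on which all `α` and `α + β` (`α, β ∈ Rpos`)
are not identically zero, and let `k = h₀ ⊕ g(Rpos)`.  Then a 2-form `ω` on `k` is
closed iff `ω = ω̂₀ + ∑ μ_α α∧ω_α + (1/2)∑ μ_{α+β} N_{αβ} ω_α∧ω_β` on `k`, for
constants `μ` and a 2-form `ω̂₀` on `h₀` trivially extended to `k`.  Moreover, if
`σ` is a conjugation of `gC` with `σ(α) = -α` on `R` and `h₀ + σ(h₀) = H`, with real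
form `g`, then `(k, ω)` is a `g`-admissible pair iff in addition `Im ω̂₀` is
nondegenerate on `l := h₀ ∩ σ(h₀) ∩ g`. -/
theorem closed_forms_on_regular_subalgebra_inner_type
    {gC : Type*} [LieRing gC] [LieAlgebra ℂ gC] [FiniteDimensional ℂ gC]
    [LieAlgebra.IsSemisimple ℂ gC]
    (H : LieSubalgebra ℂ gC) [H.IsCartanSubalgebra]
    (R : Finset (Module.Dual ℂ gC))
    (E : Module.Dual ℂ gC → gC)
    (N : Module.Dual ℂ gC → Module.Dual ℂ gC → ℝ)
    (ωc : Module.Dual ℂ gC → Module.Dual ℂ gC)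
    -- properties of the root space decomposition and the Weyl basis
    (habel : ∀ x ∈ H, ∀ y ∈ H, ⁅x, y⁆ = (0 : gC))
    (hRne : ∀ α ∈ R, α ≠ (0 : Module.Dual ℂ gC))
    (hRneg : ∀ α ∈ R, -α ∈ R)
    (hEne : ∀ α ∈ R, E α ≠ 0)
    (hroot : ∀ α ∈ R, ∀ x ∈ H, ⁅x, E α⁆ = α x • E α)
    (hαE : ∀ α ∈ R, ∀ β ∈ R, α (E β) = 0)
    (hbracket : ∀ α ∈ R, ∀ β ∈ R, α + β ∈ R → ⁅E α, E β⁆ = (N α β : ℂ) • E (α + β))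
    (hbracket0 : ∀ α ∈ R, ∀ β ∈ R, α + β ≠ 0 → α + β ∉ R → ⁅E α, E β⁆ = 0)
    (hcoroot : ∀ α ∈ R, ⁅E α, E (-α)⁆ ∈ H)
    (hN0 : ∀ α β, α + β ∉ R → N α β = 0)
    (hNneg : ∀ α β, N (-α) (-β) = - N α β)
    (hindep : LinearIndependent ℂ (fun α : {x : Module.Dual ℂ gC // x ∈ R} => E ↑α))
    (hdisj : Disjoint H.toSubmodule (Submodule.span ℂ (E '' ↑R)))
    (hdecomp : H.toSubmodule ⊔ Submodule.span ℂ (E '' ↑R) = ⊤)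
    (hωcH : ∀ α ∈ R, ∀ x ∈ H, ωc α x = 0)
    (hωcE : ∀ α ∈ R, ∀ β ∈ R, ωc α (E β) = if α = β then 1 else 0)
    -- the positive root system
    (Rpos : Finset (Module.Dual ℂ gC))
    (hRposR : Rpos ⊆ R)
    (hRposClosed : ∀ α ∈ Rpos, ∀ β ∈ Rpos, α + β ∈ R → α + β ∈ Rpos)
    (hRposTotal : ∀ α ∈ R, α ∈ Rpos ∨ -α ∈ Rpos)
    (hRposDisj : ∀ α ∈ Rpos, -α ∉ Rpos)
    -- the Cartan part `h₀ ⊆ H` of `k`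
    (h₀ : Submodule ℂ gC) (hh₀ : h₀ ≤ H.toSubmodule)
    (hα_h₀ : ∀ α ∈ Rpos, ∃ x ∈ h₀, α x ≠ 0)
    (hαβ_h₀ : ∀ α ∈ Rpos, ∀ β ∈ Rpos, ∃ x ∈ h₀, (α + β) x ≠ 0)
    -- the regular subalgebra `k = h₀ + g(Rpos)`
    (k : Submodule ℂ gC)
    (hk : k = h₀ ⊔ Submodule.span ℂ (E '' ↑Rpos))
    -- the conjugation defining a real form of inner type, with maximally compact
    -- Cartan subalgebra: `σ(α) = -α` for all roots `α`
    (σ : LieAntiInvolution gC)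
    (hσH : ∀ x ∈ H, σ.toFun x ∈ H)
    (hσα : ∀ α ∈ R, σ.dualConj α = -α)
    (hσE : ∀ α ∈ R, ∃ c : ℂ, c ≠ 0 ∧ σ.toFun (E α) = c • E (-α))
    (hHspan : ∀ x ∈ H, ∃ a ∈ h₀, ∃ b ∈ h₀, x = a + σ.toFun b)
    -- the 2-form `ω` on `k`
    (ω : gC →ₗ[ℂ] gC →ₗ[ℂ] ℂ)
    (halt : ∀ x : gC, ω x x = 0) :
    -- first claim: `ω` is closed on `k` iff it has the canonical form
    ((∀ x ∈ k, ∀ y ∈ k, ∀ z ∈ k, ω x ⁅y, z⁆ + ω z ⁅x, y⁆ + ω y ⁅z, x⁆ = 0)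
      ↔ ∃ (μ : Module.Dual ℂ gC → ℂ) (ω₀ : gC →ₗ[ℂ] gC →ₗ[ℂ] ℂ),
          (∀ γ, γ ∉ Rpos → μ γ = 0)
          ∧ (∀ x : gC, ω₀ x x = 0)
          ∧ (∀ x y : gC, x ∈ Submodule.span ℂ (E '' ↑Rpos) ∨
                y ∈ Submodule.span ℂ (E '' ↑Rpos) → ω₀ x y = 0)
          ∧ (∀ x ∈ k, ∀ y ∈ k, ω x y = ω₀ x y
              + ∑ α ∈ Rpos, μ α * (α x * ωc α y - α y * ωc α x)
              + (1/2) * ∑ α ∈ Rpos, ∑ β ∈ Rpos,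
                  μ (α + β) * (N α β : ℂ) * (ωc α x * ωc β y - ωc α y * ωc β x)))
    ∧
    -- second claim: `(k, ω)` is a `g`-admissible pair iff in addition `Im ω̂₀`
    -- is nondegenerate on `l = h₀ ∩ σ(h₀) ∩ g`
    (((∀ x ∈ k, ∀ y ∈ k, ∀ z ∈ k, ω x ⁅y, z⁆ + ω z ⁅x, y⁆ + ω y ⁅z, x⁆ = 0)
        ∧ (∀ x : gC, ∃ a ∈ k, ∃ b ∈ k, x = a + σ.toFun b)
        ∧ (∀ x ∈ k, σ.toFun x = x →
            (∀ y ∈ k, σ.toFun y = y → (ω x y).im = 0) → x = 0))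
      ↔ ∃ (μ : Module.Dual ℂ gC → ℂ) (ω₀ : gC →ₗ[ℂ] gC →ₗ[ℂ] ℂ),
          (∀ γ, γ ∉ Rpos → μ γ = 0)
          ∧ (∀ x : gC, ω₀ x x = 0)
          ∧ (∀ x y : gC, x ∈ Submodule.span ℂ (E '' ↑Rpos) ∨
                y ∈ Submodule.span ℂ (E '' ↑Rpos) → ω₀ x y = 0)
          ∧ (∀ x ∈ k, ∀ y ∈ k, ω x y = ω₀ x y
              + ∑ α ∈ Rpos, μ α * (α x * ωc α y - α y * ωc α x)
              + (1/2) * ∑ α ∈ Rpos, ∑ β ∈ Rpos,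
                  μ (α + β) * (N α β : ℂ) * (ωc α x * ωc β y - ωc α y * ωc β x))
          ∧ (∀ x ∈ h₀, x ∈ σ.toFun '' (h₀ : Set gC) → σ.toFun x = x →
              (∀ y ∈ h₀, y ∈ σ.toFun '' (h₀ : Set gC) → σ.toFun y = y →
                (ω₀ x y).im = 0) → x = 0)) := by
  have hkspan : k = Submodule.span ℂ ((h₀ : Set gC) ∪ E '' ↑Rpos) := by
    rw [hk, Submodule.span_union, Submodule.span_eq]
  have hskew : ∀ (B : gC →ₗ[ℂ] gC →ₗ[ℂ] ℂ), (∀ x, B x x = 0) → ∀ x y, B x y = - B y x := by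
    intro B hB x y
    have := hB (x + y)
    simp only [map_add, LinearMap.add_apply, hB, zero_add, add_zero] at this
    linear_combination this
  have hh₀k : ∀ x ∈ h₀, x ∈ k := fun x hx => by
    rw [hk]; exact Submodule.mem_sup_left hx
  have hEk : ∀ α ∈ Rpos, E α ∈ k := fun α hα => by
    rw [hk]; exact Submodule.mem_sup_right (Submodule.subset_span ⟨α, hα, rfl⟩)
  have hEn : ∀ α ∈ Rpos, E α ∈ Submodule.span ℂ (E '' (Rpos : Set (Module.Dual ℂ gC))) :=
    fun α hα => Submodule.subset_span ⟨α, hα, rfl⟩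
  have hsum0 : ∀ α ∈ Rpos, ∀ β ∈ Rpos, α + β ≠ 0 := by
    intro α hα β hβ h
    obtain ⟨x, -, hx⟩ := hαβ_h₀ α hα β hβ
    exact hx (by rw [h]; rfl)
  -- skew-symmetry of N
  have hNskew : ∀ α ∈ Rpos, ∀ β ∈ Rpos, (N α β : ℂ) = - (N β α : ℂ) := by
    intro α hα β hβ
    by_cases h : α + β ∈ R
    · have h1 := hbracket α (hRposR hα) β (hRposR hβ) h
      have h2 := hbracket β (hRposR hβ) α (hRposR hα) (by rwa [add_comm])
      rw [← lie_skew, h2, add_comm β α, ← neg_smul] at h1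
      exact (smul_left_injective ℂ (hEne _ h) h1).symm
    · rw [hN0 α β h, hN0 β α (by rwa [add_comm])]; simp
  -- [k,k] inside n
  have hbrk : ∀ x ∈ k, ∀ y ∈ k,
      ⁅x, y⁆ ∈ Submodule.span ℂ (E '' (Rpos : Set (Module.Dual ℂ gC))) := by
    have hgen : ∀ x ∈ ((h₀ : Set gC) ∪ E '' ↑Rpos), ∀ y ∈ ((h₀ : Set gC) ∪ E '' ↑Rpos),
        ⁅x, y⁆ ∈ Submodule.span ℂ (E '' (Rpos : Set (Module.Dual ℂ gC))) := by
      rintro x (hx | ⟨α, hα, rfl⟩) y (hy | ⟨β, hβ, rfl⟩)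
      · rw [habel x (hh₀ hx) y (hh₀ hy)]; exact Submodule.zero_mem _
      · rw [hroot β (hRposR hβ) x (hh₀ hx)]
        exact Submodule.smul_mem _ _ (hEn β hβ)
      · rw [← lie_skew, hroot α (hRposR hα) y (hh₀ hy)]
        exact Submodule.neg_mem _ (Submodule.smul_mem _ _ (hEn α hα))
      · by_cases h : α + β ∈ R
        · rw [hbracket α (hRposR hα) β (hRposR hβ) h]
          exact Submodule.smul_mem _ _ (hEn _ (hRposClosed α hα β hβ h))
        · rw [hbracket0 α (hRposR hα) β (hRposR hβ) (hsum0 α hα β hβ) h]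
          exact Submodule.zero_mem _
    intro x hx y hy
    rw [hkspan] at hx hy
    induction hx using Submodule.span_induction with
    | zero => simp
    | add a b _ _ ha hb => rw [add_lie]; exact Submodule.add_mem _ ha hb
    | smul c a _ ha => rw [smul_lie]; exact Submodule.smul_mem _ _ ha
    | mem a ha =>
      induction hy using Submodule.span_induction with
      | zero => simp
      | add b c _ _ hb hc => rw [lie_add]; exact Submodule.add_mem _ hb hc
      | smul c b _ hb => rw [lie_smul]; exact Submodule.smul_mem _ _ hb
      | mem b hb => exact hgen a ha b hb
  have hnk : ∀ x ∈ Submodule.span ℂ (E '' (Rpos : Set (Module.Dual ℂ gC))), x ∈ k := by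
    intro x hx; rw [hk]; exact Submodule.mem_sup_right hx
  -- values on generators
  have hfE : ∀ (μ : Module.Dual ℂ gC → ℂ), ∀ β ∈ Rpos,
      ∑ α ∈ Rpos, μ α * ωc α (E β) = μ β := by
    intro μ β hβ
    rw [Finset.sum_eq_single_of_mem β hβ]
    · rw [hωcE β (hRposR hβ) β (hRposR hβ)]; simp
    · intro α hα hne
      rw [hωcE α (hRposR hα) β (hRposR hβ), if_neg hne, mul_zero]
  have hfEE : ∀ (μ : Module.Dual ℂ gC → ℂ), ∀ α ∈ Rpos, ∀ β ∈ Rpos,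
      ∑ γ ∈ Rpos, μ γ * ωc γ ⁅E α, E β⁆ = μ (α + β) * (N α β : ℂ) := by
    intro μ α hα β hβ
    by_cases h : α + β ∈ R
    · have := hfE μ (α + β) (hRposClosed α hα β hβ h)
      rw [hbracket α (hRposR hα) β (hRposR hβ) h, ← this, Finset.sum_mul]
      refine Finset.sum_congr rfl fun γ _ => ?_
      rw [map_smul, smul_eq_mul]; ring
    · rw [hbracket0 α (hRposR hα) β (hRposR hβ) (hsum0 α hα β hβ) h, hN0 α β h]
      simp
  have hfhE : ∀ (μ : Module.Dual ℂ gC → ℂ), ∀ x ∈ h₀, ∀ β ∈ Rpos,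
      ∑ γ ∈ Rpos, μ γ * ωc γ ⁅x, E β⁆ = μ β * β x := by
    intro μ x hx β hβ
    rw [hroot β (hRposR hβ) x (hh₀ hx), ← hfE μ β hβ, Finset.sum_mul]
    refine Finset.sum_congr rfl fun γ _ => ?_
    rw [map_smul, smul_eq_mul]; ring
  have hwh : ∀ α ∈ Rpos, ∀ x ∈ h₀, ωc α x = 0 := fun α hα x hx =>
    hωcH α (hRposR hα) x (hh₀ hx)
  -- the canonical form is the differential of `∑ μ α ωc α`
  have hcanon : ∀ (μ : Module.Dual ℂ gC → ℂ), ∀ x ∈ k, ∀ y ∈ k,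
      ∑ α ∈ Rpos, μ α * (α x * ωc α y - α y * ωc α x)
        + (1/2) * ∑ α ∈ Rpos, ∑ β ∈ Rpos,
            μ (α + β) * (N α β : ℂ) * (ωc α x * ωc β y - ωc α y * ωc β x)
      = ∑ γ ∈ Rpos, μ γ * ωc γ ⁅x, y⁆ := by
    intro μ
    let B : gC →ₗ[ℂ] gC →ₗ[ℂ] ℂ := LinearMap.mk₂ ℂ (fun x y =>
      ∑ α ∈ Rpos, μ α * (α x * ωc α y - α y * ωc α x)
        + (1/2) * ∑ α ∈ Rpos, ∑ β ∈ Rpos,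
            μ (α + β) * (N α β : ℂ) * (ωc α x * ωc β y - ωc α y * ωc β x)
        - ∑ γ ∈ Rpos, μ γ * ωc γ ⁅x, y⁆)
      (by
        intro a b c
        simp only [map_add, add_lie, mul_add, add_mul, mul_sub, sub_mul,
          Finset.sum_add_distrib, Finset.sum_sub_distrib]
        ring)
      (by
        intro t a b
        simp only [map_smul, smul_lie, smul_eq_mul, mul_sub, mul_add, Finset.mul_sum]
        congr 1
        · congr 1
          · refine Finset.sum_congr rfl fun γ _ => ?_
            ring
          · refine Finset.sum_congr rfl fun γ _ => Finset.sum_congr rfl fun δ _ => ?_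
            ring
        · refine Finset.sum_congr rfl fun γ _ => ?_
          ring)
      (by
        intro a b c
        simp only [map_add, lie_add, mul_add, add_mul, mul_sub, sub_mul,
          Finset.sum_add_distrib, Finset.sum_sub_distrib]
        ring)
      (by
        intro t a b
        simp only [map_smul, lie_smul, smul_eq_mul, mul_sub, mul_add, Finset.mul_sum]
        congr 1
        · congr 1
          · refine Finset.sum_congr rfl fun γ _ => ?_
            ring
          · refine Finset.sum_congr rfl fun γ _ => Finset.sum_congr rfl fun δ _ => ?_
            ring
        · refine Finset.sum_congr rfl fun γ _ => ?_
          ring)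
    have hB : ∀ x y, B x y = ∑ α ∈ Rpos, μ α * (α x * ωc α y - α y * ωc α x)
        + (1/2) * ∑ α ∈ Rpos, ∑ β ∈ Rpos,
            μ (α + β) * (N α β : ℂ) * (ωc α x * ωc β y - ωc α y * ωc β x)
        - ∑ γ ∈ Rpos, μ γ * ωc γ ⁅x, y⁆ := fun x y => rfl
    have hBalt : ∀ x, B x x = 0 := by
      intro x
      rw [hB, lie_self]
      simp only [map_zero, mul_zero, sub_self, Finset.sum_const_zero, zero_add]
    have hhE : ∀ x ∈ h₀, ∀ β ∈ Rpos, B x (E β) = 0 := by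
      intro x hx β hβ
      rw [hB, hfhE μ x hx β hβ]
      have h1 : ∑ α ∈ Rpos, μ α * (α x * ωc α (E β) - α (E β) * ωc α x) = μ β * β x := by
        rw [← hfE (fun α => μ α * α x) β hβ]
        refine Finset.sum_congr rfl fun α hα => ?_
        rw [hwh α hα x hx]; ring
      have h2 : ∑ α ∈ Rpos, ∑ γ ∈ Rpos, μ (α + γ) * (N α γ : ℂ) *
          (ωc α x * ωc γ (E β) - ωc α (E β) * ωc γ x) = 0 :=
        Finset.sum_eq_zero fun α hα => Finset.sum_eq_zero fun γ hγ => by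
          rw [hwh α hα x hx, hwh γ hγ x hx]; ring
      rw [h1, h2]; ring
    have hz := bil_zero_on_span B ((h₀ : Set gC) ∪ E '' ↑Rpos) (by
      rintro x (hx | ⟨α, hα, rfl⟩) y (hy | ⟨β, hβ, rfl⟩)
      · rw [hB, habel x (hh₀ hx) y (hh₀ hy)]
        have h1 : ∑ α ∈ Rpos, μ α * (α x * ωc α y - α y * ωc α x) = 0 :=
          Finset.sum_eq_zero fun α hα => by
            rw [hwh α hα x hx, hwh α hα y hy]; ring
        have h2 : ∑ α ∈ Rpos, ∑ γ ∈ Rpos, μ (α + γ) * (N α γ : ℂ) *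
            (ωc α x * ωc γ y - ωc α y * ωc γ x) = 0 :=
          Finset.sum_eq_zero fun α hα => Finset.sum_eq_zero fun γ hγ => by
            rw [hwh α hα x hx, hwh γ hγ x hx]; ring
        rw [h1, h2]; simp
      · exact hhE x hx β hβ
      · rw [hskew B hBalt, hhE y hy α hα, neg_zero]
      · rw [Finset.mem_coe] at hα hβ
        rw [hB, hfEE μ α hα β hβ]
        have h1 : ∑ γ ∈ Rpos, μ γ * (γ (E α) * ωc γ (E β) - γ (E β) * ωc γ (E α)) = 0 :=
          Finset.sum_eq_zero fun γ hγ => by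
            rw [hαE γ (hRposR hγ) α (hRposR hα), hαE γ (hRposR hγ) β (hRposR hβ)]; ring
        have h2 : ∑ γ ∈ Rpos, ∑ δ ∈ Rpos, μ (γ + δ) * (N γ δ : ℂ) *
            (ωc γ (E α) * ωc δ (E β) - ωc γ (E β) * ωc δ (E α))
            = μ (α + β) * (N α β : ℂ) - μ (β + α) * (N β α : ℂ) := by
          rw [← hfE (fun γ => μ (γ + β) * (N γ β : ℂ)) α hα,
            ← hfE (fun γ => μ (γ + α) * (N γ α : ℂ)) β hβ, ← Finset.sum_sub_distrib]
          refine Finset.sum_congr rfl fun γ hγ => ?_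
          rw [← hfE (fun δ => μ (γ + δ) * (N γ δ : ℂ)) α hα,
            ← hfE (fun δ => μ (γ + δ) * (N γ δ : ℂ)) β hβ, Finset.sum_mul, Finset.sum_mul,
            ← Finset.sum_sub_distrib]
          refine Finset.sum_congr rfl fun δ hδ => ?_
          ring
        rw [h1, h2, hNskew β hβ α hα, add_comm β α]; ring)
    intro x hx y hy
    rw [hkspan] at hx hy
    have := hz x hx y hy
    rw [hB] at this
    exact sub_eq_zero.1 this
  -- the form implies closedness
  have hclosed : ∀ (μ : Module.Dual ℂ gC → ℂ) (ω₀ : gC →ₗ[ℂ] gC →ₗ[ℂ] ℂ),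
      (∀ x y : gC, x ∈ Submodule.span ℂ (E '' (Rpos : Set (Module.Dual ℂ gC))) ∨
        y ∈ Submodule.span ℂ (E '' (Rpos : Set (Module.Dual ℂ gC))) → ω₀ x y = 0) →
      (∀ x ∈ k, ∀ y ∈ k, ω x y = ω₀ x y
              + ∑ α ∈ Rpos, μ α * (α x * ωc α y - α y * ωc α x)
              + (1/2) * ∑ α ∈ Rpos, ∑ β ∈ Rpos,
                  μ (α + β) * (N α β : ℂ) * (ωc α x * ωc β y - ωc α y * ωc β x)) →
      (∀ x ∈ k, ∀ y ∈ k, ∀ z ∈ k, ω x ⁅y, z⁆ + ω z ⁅x, y⁆ + ω y ⁅z, x⁆ = 0) := by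
    intro μ ω₀ h0 hω
    have hω' : ∀ x ∈ k, ∀ y ∈ k, ∀ z ∈ k,
        ω x ⁅y, z⁆ = ∑ γ ∈ Rpos, μ γ * ωc γ ⁅x, ⁅y, z⁆⁆ := by
      intro x hx y hy z hz
      have hb := hbrk y hy z hz
      rw [hω x hx _ (hnk _ hb), add_assoc, hcanon μ x hx _ (hnk _ hb), h0 _ _ (Or.inr hb),
        zero_add]
    intro x hx y hy z hz
    rw [hω' x hx y hy z hz, hω' z hz x hx y hy, hω' y hy z hz x hx,
      ← Finset.sum_add_distrib, ← Finset.sum_add_distrib]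
    refine Finset.sum_eq_zero fun γ _ => ?_
    rw [← mul_add, ← mul_add, ← map_add, ← map_add]
    have : ⁅x, ⁅y, z⁆⁆ + ⁅z, ⁅x, y⁆⁆ + ⁅y, ⁅z, x⁆⁆ = 0 := by
      rw [← lie_jacobi x y z]; abel
    rw [this, map_zero, mul_zero]
  -- closedness implies the form
  have hform : (∀ x ∈ k, ∀ y ∈ k, ∀ z ∈ k, ω x ⁅y, z⁆ + ω z ⁅x, y⁆ + ω y ⁅z, x⁆ = 0) →
      ∃ (μ : Module.Dual ℂ gC → ℂ) (ω₀ : gC →ₗ[ℂ] gC →ₗ[ℂ] ℂ),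
          (∀ γ, γ ∉ Rpos → μ γ = 0)
          ∧ (∀ x : gC, ω₀ x x = 0)
          ∧ (∀ x y : gC, x ∈ Submodule.span ℂ (E '' ↑Rpos) ∨
                y ∈ Submodule.span ℂ (E '' ↑Rpos) → ω₀ x y = 0)
          ∧ (∀ x ∈ k, ∀ y ∈ k, ω x y = ω₀ x y
              + ∑ α ∈ Rpos, μ α * (α x * ωc α y - α y * ωc α x)
              + (1/2) * ∑ α ∈ Rpos, ∑ β ∈ Rpos,
                  μ (α + β) * (N α β : ℂ) * (ωc α x * ωc β y - ωc α y * ωc β x)) := by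
    intro hcl
    have hωs := hskew ω halt
    have hμ : ∀ α : Module.Dual ℂ gC, ∃ m : ℂ, (α ∉ Rpos → m = 0) ∧
        (α ∈ Rpos → ∀ x ∈ h₀, ω x (E α) = m * α x) := by
      intro α
      by_cases hα : α ∈ Rpos
      · obtain ⟨a, ha, hne⟩ := hα_h₀ α hα
        refine ⟨ω a (E α) / α a, fun h => absurd hα h, fun _ x hx => ?_⟩
        have h := hcl x (hh₀k x hx) a (hh₀k a ha) (E α) (hEk α hα)
        rw [← lie_skew (E α) x] at h
        rw [habel x (hh₀ hx) a (hh₀ ha), hroot α (hRposR hα) a (hh₀ ha),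
          hroot α (hRposR hα) x (hh₀ hx)] at h
        simp only [map_smul, map_neg, map_zero, smul_eq_mul, add_zero] at h
        field_simp
        linear_combination h
      · exact ⟨0, fun _ => rfl, fun h => absurd h hα⟩
    choose μ hμ0 hμ1 using hμ
    have hcompl : IsCompl H.toSubmodule (Submodule.span ℂ (E '' (R : Set (Module.Dual ℂ gC)))) :=
      ⟨hdisj, codisjoint_iff.2 hdecomp⟩
    let p : gC →ₗ[ℂ] gC := Submodule.projection _ _ hcompl
    have hpH : ∀ x ∈ H, p x = x := fun x hx =>
      (Submodule.projection_eq_self_iff hcompl x).2 hx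
    have hpn : ∀ x ∈ Submodule.span ℂ (E '' (Rpos : Set (Module.Dual ℂ gC))), p x = 0 := by
      intro x hx
      refine (Submodule.projection_apply_eq_zero_iff hcompl).2 ?_
      exact Submodule.span_mono (Set.image_mono (by exact_mod_cast hRposR)) hx
    refine ⟨μ, ω.compl₁₂ p p, fun γ hγ => hμ0 γ hγ, fun x => halt _, ?_, ?_⟩
    · rintro x y (h | h)
      · rw [LinearMap.compl₁₂_apply, hpn x h, map_zero, LinearMap.zero_apply]
      · rw [LinearMap.compl₁₂_apply, hpn y h, map_zero]
    · let B : gC →ₗ[ℂ] gC →ₗ[ℂ] ℂ := ω - ω.compl₁₂ p p - LinearMap.mk₂ ℂ (fun x y =>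
        ∑ γ ∈ Rpos, μ γ * ωc γ ⁅x, y⁆)
        (by intro a b c; simp only [map_add, add_lie, mul_add, Finset.sum_add_distrib])
        (by
          intro t a b
          simp only [map_smul, smul_lie, smul_eq_mul, Finset.mul_sum]
          exact Finset.sum_congr rfl fun γ _ => by ring)
        (by intro a b c; simp only [map_add, lie_add, mul_add, Finset.sum_add_distrib])
        (by
          intro t a b
          simp only [map_smul, lie_smul, smul_eq_mul, Finset.mul_sum]
          exact Finset.sum_congr rfl fun γ _ => by ring)
      have hB : ∀ x y, B x y = ω x y - ω (p x) (p y) - ∑ γ ∈ Rpos, μ γ * ωc γ ⁅x, y⁆ :=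
        fun x y => rfl
      have hBalt : ∀ x, B x x = 0 := by
        intro x
        rw [hB, halt, halt, lie_self]; simp
      have hhE : ∀ x ∈ h₀, ∀ β ∈ Rpos, B x (E β) = 0 := by
        intro x hx β hβ
        rw [hB, hfhE μ x hx β hβ, hpn _ (hEn β hβ), hμ1 β hβ x hx]
        simp
      have hz := bil_zero_on_span B ((h₀ : Set gC) ∪ E '' ↑Rpos) (by
        rintro x (hx | ⟨α, hα, rfl⟩) y (hy | ⟨β, hβ, rfl⟩)
        · rw [hB, habel x (hh₀ hx) y (hh₀ hy), hpH x (hh₀ hx), hpH y (hh₀ hy)]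
          simp
        · exact hhE x hx β hβ
        · rw [hskew B hBalt, hhE y hy α hα, neg_zero]
        · rw [Finset.mem_coe] at hα hβ
          rw [hB, hfEE μ α hα β hβ, hpn _ (hEn β hβ), map_zero]
          obtain ⟨a, ha, hne⟩ := hαβ_h₀ α hα β hβ
          have h := hcl a (hh₀k a ha) (E α) (hEk α hα) (E β) (hEk β hβ)
          rw [← lie_skew (E β) a, hroot α (hRposR hα) a (hh₀ ha),
            hroot β (hRposR hβ) a (hh₀ ha)] at h
          simp only [map_smul, map_neg, smul_eq_mul] at h
          rw [hωs (E β) (E α)] at h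
          have h' : ω a ⁅E α, E β⁆ = μ (α + β) * (N α β : ℂ) * (α + β) a := by
            by_cases hab : α + β ∈ R
            · rw [hbracket α (hRposR hα) β (hRposR hβ) hab, map_smul, smul_eq_mul,
                hμ1 _ (hRposClosed α hα β hβ hab) a ha]
              ring
            · rw [hbracket0 α (hRposR hα) β (hRposR hβ) (hsum0 α hα β hβ) hab, hN0 α β hab]
              simp
          rw [h'] at h
          apply mul_left_cancel₀ hne
          rw [LinearMap.add_apply] at h ⊢
          linear_combination -h)
      intro x hx y hy
      rw [add_assoc, hcanon μ x hx y hy]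
      rw [hkspan] at hx hy
      have := hz x hx y hy
      rw [hB] at this
      rw [LinearMap.compl₁₂_apply]
      linear_combination this
  -- `k + σ(k) = gC`
  have hσ0 : σ.toFun 0 = 0 := by
    have := σ.map_smul' 0 0
    simpa using this
  have hspan : ∀ x : gC, ∃ a ∈ k, ∃ b ∈ k, x = a + σ.toFun b := by
    have hadd : ∀ x y : gC, (∃ a ∈ k, ∃ b ∈ k, x = a + σ.toFun b) →
        (∃ a ∈ k, ∃ b ∈ k, y = a + σ.toFun b) →
        (∃ a ∈ k, ∃ b ∈ k, x + y = a + σ.toFun b) := by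
      rintro x y ⟨a, ha, b, hb, rfl⟩ ⟨c, hc, d, hd, rfl⟩
      refine ⟨a + c, k.add_mem ha hc, b + d, k.add_mem hb hd, ?_⟩
      rw [σ.map_add']; abel
    intro x
    have hx : x ∈ H.toSubmodule ⊔ Submodule.span ℂ (E '' ↑R) := by
      rw [hdecomp]; trivial
    obtain ⟨u, hu, v, hv, rfl⟩ := Submodule.mem_sup.1 hx
    refine hadd u v ?_ ?_
    · obtain ⟨a, ha, b, hb, h⟩ := hHspan u hu
      exact ⟨a, hh₀k a ha, b, hh₀k b hb, h⟩
    · clear hx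
      induction hv using Submodule.span_induction with
      | zero => exact ⟨0, k.zero_mem, 0, k.zero_mem, by rw [hσ0, add_zero]⟩
      | add a b _ _ ha hb => exact hadd a b ha hb
      | smul c a _ ha =>
        obtain ⟨a, ha, b, hb, rfl⟩ := ha
        refine ⟨c • a, k.smul_mem _ ha, (starRingEnd ℂ) c • b, k.smul_mem _ hb, ?_⟩
        rw [σ.map_smul', Complex.conj_conj, smul_add]
      | mem a ha =>
        obtain ⟨α, hα, rfl⟩ := ha
        rcases hRposTotal α hα with h | h
        · exact ⟨E α, hEk α h, 0, k.zero_mem, by rw [hσ0, add_zero]⟩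
        · obtain ⟨c, hc, hcE⟩ := hσE (-α) (hRneg α hα)
          rw [neg_neg] at hcE
          refine ⟨0, k.zero_mem, (starRingEnd ℂ) c⁻¹ • E (-α), k.smul_mem _ (hEk _ h), ?_⟩
          rw [σ.map_smul', Complex.conj_conj, hcE, smul_smul, inv_mul_cancel₀ hc, one_smul,
            zero_add]
  -- the real points of `k`
  have hreal : ∀ x ∈ k, σ.toFun x = x → x ∈ h₀ := by
    intro x hx hσx
    have hw0 : ∀ y ∈ k, ∀ α ∈ Rpos, ωc α (σ.toFun y) = 0 := by
      intro y hy α hα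
      rw [hkspan] at hy
      induction hy using Submodule.span_induction with
      | zero => rw [hσ0, map_zero]
      | add a b _ _ ha hb => rw [σ.map_add', map_add, ha, hb, add_zero]
      | smul c a _ ha => rw [σ.map_smul', map_smul, ha, smul_zero]
      | mem a ha =>
        rcases ha with ha | ⟨β, hβ, rfl⟩
        · exact hωcH α (hRposR hα) _ (hσH a (hh₀ ha))
        · rw [Finset.mem_coe] at hβ
          obtain ⟨c, hc, hcE⟩ := hσE β (hRposR hβ)
          rw [hcE, map_smul, hωcE α (hRposR hα) _ (hRneg β (hRposR hβ)), if_neg, smul_zero]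
          rintro rfl
          exact hRposDisj β hβ hα
    have hdec : ∀ y ∈ Submodule.span ℂ (E '' (Rpos : Set (Module.Dual ℂ gC))),
        y = ∑ α ∈ Rpos, ωc α y • E α := by
      intro y hy
      induction hy using Submodule.span_induction with
      | zero => simp
      | add a b _ _ ha hb =>
        simp only [map_add, add_smul, Finset.sum_add_distrib]
        rw [← ha, ← hb]
      | smul c a _ ha =>
        simp only [map_smul, smul_assoc, ← Finset.smul_sum]
        rw [← ha]
      | mem a ha =>
        obtain ⟨β, hβ, rfl⟩ := ha
        rw [Finset.mem_coe] at hβ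
        rw [Finset.sum_eq_single_of_mem β hβ]
        · rw [hωcE β (hRposR hβ) β (hRposR hβ)]; simp
        · intro α hα hne
          rw [hωcE α (hRposR hα) β (hRposR hβ), if_neg hne, zero_smul]
    have hx' := hx
    rw [hk] at hx'
    obtain ⟨u, hu, v, hv, rfl⟩ := Submodule.mem_sup.1 hx'
    have hv0 : v = 0 := by
      rw [hdec v hv]
      refine Finset.sum_eq_zero fun α hα => ?_
      have := hw0 _ hx α hα
      rw [hσx, map_add, hwh α hα u hu, zero_add] at this
      rw [this, zero_smul]
    rw [hv0, add_zero]
    exact hu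
  have hωω₀ : ∀ (μ : Module.Dual ℂ gC → ℂ) (ω₀ : gC →ₗ[ℂ] gC →ₗ[ℂ] ℂ),
      (∀ x ∈ k, ∀ y ∈ k, ω x y = ω₀ x y
              + ∑ α ∈ Rpos, μ α * (α x * ωc α y - α y * ωc α x)
              + (1/2) * ∑ α ∈ Rpos, ∑ β ∈ Rpos,
                  μ (α + β) * (N α β : ℂ) * (ωc α x * ωc β y - ωc α y * ωc β x)) →
      ∀ x ∈ h₀, ∀ y ∈ h₀, ω x y = ω₀ x y := by
    intro μ ω₀ h x hx y hy
    rw [h x (hh₀k x hx) y (hh₀k y hy), add_assoc, hcanon μ x (hh₀k x hx) y (hh₀k y hy),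
      habel x (hh₀ hx) y (hh₀ hy)]
    simp
  refine ⟨⟨hform, ?_⟩, ⟨?_, ?_⟩⟩
  · rintro ⟨μ, ω₀, -, -, h0, hω⟩
    exact hclosed μ ω₀ h0 hω
  · rintro ⟨hcl, -, hnd⟩
    obtain ⟨μ, ω₀, hμ, ha, h0, hω⟩ := hform hcl
    refine ⟨μ, ω₀, hμ, ha, h0, hω, ?_⟩
    intro x hx _ hσx hy
    refine hnd x (hh₀k x hx) hσx fun y hyk hσy => ?_
    have hyh := hreal y hyk hσy
    rw [hωω₀ μ ω₀ hω x hx y hyh]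
    exact hy y hyh ⟨y, hyh, hσy⟩ hσy
  · rintro ⟨μ, ω₀, hμ, ha, h0, hω, hnd⟩
    refine ⟨hclosed μ ω₀ h0 hω, hspan, ?_⟩
    intro x hxk hσx hy
    have hxh := hreal x hxk hσx
    refine hnd x hxh ⟨x, hxh, hσx⟩ hσx fun y hyh _ hσy => ?_
    rw [← hωω₀ μ ω₀ hω x hxh y hyh]
    exact hy y (hh₀k y hyh) hσy
end

section
/- Let g^ℂ be a finite-dimensional complex semisimple Lie algebra with Cartan subalgebra h, root system R, positive system R⁺ and a fixed Weyl basis {E_α}. Let τ be the compact antiinvolution (the antilinear involutive automorphism with τ|_{h(ℝ)} = −Id on the real span h(ℝ) of the coroots and τ(E_α) = −E_{−α} for all α ∈ R), and g = (g^ℂ)^τ the compact real form. Given constants μ_α ∈ ℂ (α ∈ R⁺), define the covector ξ := −Σ_{α∈R⁺} μ_α ω_α + Σ_{α∈R⁺} conj(μ_α) ω_{−α} and the 2-form B := dξ on g^ℂ, B(x,y) = −ξ([x,y]). Then: (1) ξ takes real values on g; and (2) for any subspace h₀ ⊆ h, the restriction of B to the subalgebra k = h₀ ⊕ g(R⁺)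 equals Σ_{α∈R⁺} μ_α α∧ω_α + (1/2) Σ_{α,β∈R⁺} μ_{α+β} N_{αβ} ω_α∧ω_β (the term μ_{α+β}N_{αβ} interpreted as 0 when α+β ∉ R). -/
open Finset
open scoped Classical

/-- **Proposition `B-field`.**  Let `gC` be a finite-dimensional complex
semisimple Lie algebra with Cartan subalgebra `H`, root system `R`, positive system
`Rpos` and Weyl basis `{E α}` with structure constants `N` and dual covectors `ωc α`.
Let `τ` be the compact antiinvolution (`τ = -Id` on the real span of the coroots and
`τ(E α) = -E (-α)`), with compact real form `g = fix(τ)`.  For constants `μ α`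
(`α ∈ Rpos`) let `ξ := -∑ μ_α ω_α + ∑ conj(μ_α) ω_{-α}` and `B := dξ`, i.e.
`B(x,y) = -ξ ⁅x,y⁆`.  Then (1) `ξ` takes real values on `g`, and (2) on the
subalgebra `k = h₀ ⊕ g(Rpos)` the form `B` equals
`∑ μ_α α∧ω_α + (1/2) ∑ μ_{α+β} N_{αβ} ω_α∧ω_β`. -/
theorem b_field_covector_real_and_restriction
    {gC : Type*} [LieRing gC] [LieAlgebra ℂ gC] [FiniteDimensional ℂ gC]
    [LieAlgebra.IsSemisimple ℂ gC]
    (H : LieSubalgebra ℂ gC) [H.IsCartanSubalgebra]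
    (R : Finset (Module.Dual ℂ gC))
    (E : Module.Dual ℂ gC → gC)
    (N : Module.Dual ℂ gC → Module.Dual ℂ gC → ℝ)
    (ωc : Module.Dual ℂ gC → Module.Dual ℂ gC)
    -- properties of the root space decomposition and the Weyl basis
    (habel : ∀ x ∈ H, ∀ y ∈ H, ⁅x, y⁆ = (0 : gC))
    (hRne : ∀ α ∈ R, α ≠ (0 : Module.Dual ℂ gC))
    (hRneg : ∀ α ∈ R, -α ∈ R)
    (hEne : ∀ α ∈ R, E α ≠ 0)
    (hroot : ∀ α ∈ R, ∀ x ∈ H, ⁅x, E α⁆ = α x • E α)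
    (hαE : ∀ α ∈ R, ∀ β ∈ R, α (E β) = 0)
    (hbracket : ∀ α ∈ R, ∀ β ∈ R, α + β ∈ R → ⁅E α, E β⁆ = (N α β : ℝ) • E (α + β))
    (hbracket0 : ∀ α ∈ R, ∀ β ∈ R, α + β ≠ 0 → α + β ∉ R → ⁅E α, E β⁆ = 0)
    (hcoroot : ∀ α ∈ R, ⁅E α, E (-α)⁆ ∈ H)
    (hN0 : ∀ α β, α + β ∉ R → N α β = 0)
    (hNneg : ∀ α β, N (-α) (-β) = - N α β)
    (hindep : LinearIndependent ℂ (fun α : {x : Module.Dual ℂ gC // x ∈ R} => E ↑α))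
    (hdisj : Disjoint H.toSubmodule (Submodule.span ℂ (E '' ↑R)))
    (hdecomp : H.toSubmodule ⊔ Submodule.span ℂ (E '' ↑R) = ⊤)
    (hωcH : ∀ α ∈ R, ∀ x ∈ H, ωc α x = 0)
    (hωcE : ∀ α ∈ R, ∀ β ∈ R, ωc α (E β) = if α = β then 1 else 0)
    -- the positive root system
    (Rpos : Finset (Module.Dual ℂ gC))
    (hRposR : Rpos ⊆ R)
    (hRposClosed : ∀ α ∈ Rpos, ∀ β ∈ Rpos, α + β ∈ R → α + β ∈ Rpos)
    (hRposTotal : ∀ α ∈ R, α ∈ Rpos ∨ -α ∈ Rpos)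
    (hRposDisj : ∀ α ∈ Rpos, -α ∉ Rpos)
    -- the compact antiinvolution `τ`
    (τ : LieAntiInvolution gC)
    (hτH : ∀ x ∈ H, τ.toFun x ∈ H)
    (hτE : ∀ α ∈ R, τ.toFun (E α) = -E (-α))
    (hτcoroot : ∀ α ∈ R, τ.toFun ⁅E α, E (-α)⁆ = -⁅E α, E (-α)⁆)
    -- the constants and the covector `ξ`
    (μ : Module.Dual ℂ gC → ℂ)
    (ξ : Module.Dual ℂ gC)
    (hξ : ξ = -∑ α ∈ Rpos, μ α • ωc α
            + ∑ α ∈ Rpos, (starRingEnd ℂ) (μ α) • ωc (-α))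
    -- the subalgebra `k = h₀ + g(Rpos)`
    (h₀ : Submodule ℂ gC) (hh₀ : h₀ ≤ H.toSubmodule)
    (k : Submodule ℂ gC)
    (hk : k = h₀ ⊔ Submodule.span ℂ (E '' ↑Rpos)) :
    -- (1) `ξ` takes real values on the compact real form `g`
    (∀ x : gC, τ.toFun x = x → (ξ x).im = 0)
    -- (2) the restriction of `B = dξ` to `k`
    ∧ (∀ x ∈ k, ∀ y ∈ k,
        -ξ ⁅x, y⁆ = ∑ α ∈ Rpos, μ α * (α x * ωc α y - α y * ωc α x)
          + (1/2) * ∑ α ∈ Rpos, ∑ β ∈ Rpos,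
              μ (α + β) * (N α β : ℂ) * (ωc α x * ωc β y - ωc α y * ωc β x)) := by
  have hposR : ∀ α ∈ Rpos, α ∈ R := fun α h => hRposR h
  have hξx : ∀ x, ξ x = -∑ α ∈ Rpos, μ α * ωc α x
      + ∑ α ∈ Rpos, (starRingEnd ℂ) (μ α) * ωc (-α) x := by
    intro x
    rw [hξ]
    simp [LinearMap.sum_apply]
  have hξH : ∀ x ∈ H, ξ x = 0 := by
    intro x hx
    rw [hξx, Finset.sum_eq_zero, Finset.sum_eq_zero]
    · simp
    · intro α hα
      rw [hωcH _ (hRneg α (hposR α hα)) x hx, mul_zero]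
    · intro α hα
      rw [hωcH _ (hposR α hα) x hx, mul_zero]
  have hξE : ∀ β ∈ Rpos, ξ (E β) = -μ β := by
    intro β hβ
    rw [hξx, Finset.sum_eq_single β, Finset.sum_eq_zero]
    · rw [hωcE β (hposR β hβ) β (hposR β hβ)]; simp
    · intro α hα
      rw [hωcE _ (hRneg α (hposR α hα)) β (hposR β hβ), if_neg, mul_zero]
      rintro rfl
      exact hRposDisj α hα hβ
    · intro α hα hne
      rw [hωcE α (hposR α hα) β (hposR β hβ), if_neg hne, mul_zero]
    · intro h; exact absurd hβ h
  refine ⟨?_, ?_⟩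
  · have hτ0 : τ.toFun 0 = 0 := by
      have := τ.map_smul' 0 0
      simpa using this
    have hτneg : ∀ x, τ.toFun (-x) = -τ.toFun x := by
      intro x
      have := τ.map_smul' (-1) x
      simpa using this
    have key : ∀ α ∈ R, ∀ x, ωc α (τ.toFun x) = -(starRingEnd ℂ) (ωc (-α) x) := by
      intro α hα x
      have hx : x ∈ Submodule.span ℂ ((H.toSubmodule : Set gC) ∪ E '' ↑R) := by
        rw [Submodule.span_union, Submodule.span_eq, hdecomp]; trivial
      induction hx using Submodule.span_induction with
      | mem x hx =>
        rcases hx with hx | ⟨β, hβ, rfl⟩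
        · rw [hωcH α hα _ (hτH x hx), hωcH _ (hRneg α hα) x hx]; simp
        · have hβ' : β ∈ R := hβ
          rw [hτE β hβ', map_neg, hωcE α hα _ (hRneg β hβ'), hωcE _ (hRneg α hα) β hβ']
          by_cases h : α = -β
          · subst h; simp
          · have h' : ¬ (-α = β) := fun h' => h (by rw [← h', neg_neg])
            simp [h, h']
      | zero => rw [hτ0]; simp
      | add x y _ _ hx hy => rw [τ.map_add', map_add, hx, hy, map_add, map_add]; ring
      | smul c x _ hx => rw [τ.map_smul', map_smul, hx, map_smul]; simp
    intro x hx
    rw [hξx, ← Finset.sum_neg_distrib, ← Finset.sum_add_distrib, Complex.im_sum]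
    apply Finset.sum_eq_zero
    intro α hα
    have h := key α (hposR α hα) x
    rw [hx] at h
    rw [h]
    simp
    ring
  · obtain ⟨F, hF⟩ : ∃ F : gC → gC → ℂ, F = fun x y =>
        ∑ α ∈ Rpos, μ α * (α x * ωc α y - α y * ωc α x)
          + (1/2) * ∑ α ∈ Rpos, ∑ β ∈ Rpos,
              μ (α + β) * (N α β : ℂ) * (ωc α x * ωc β y - ωc α y * ωc β x) := ⟨_, rfl⟩
    have hFanti : ∀ x y, F x y = -F y x := by
      intro x y
      simp only [hF, Finset.mul_sum, neg_add, ← Finset.sum_neg_distrib]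
      congr 1
      · refine Finset.sum_congr rfl fun α _ => ?_
        ring
      · refine Finset.sum_congr rfl fun α _ => Finset.sum_congr rfl fun β _ => ?_
        ring
    have hFadd : ∀ x x' y, F (x + x') y = F x y + F x' y := by
      intro x x' y
      simp only [hF, Finset.mul_sum]
      rw [add_add_add_comm]
      congr 1
      · rw [← Finset.sum_add_distrib]
        refine Finset.sum_congr rfl fun α _ => ?_
        simp only [map_add]
        ring
      · rw [← Finset.sum_add_distrib]
        refine Finset.sum_congr rfl fun α _ => ?_
        rw [← Finset.sum_add_distrib]
        refine Finset.sum_congr rfl fun β _ => ?_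
        simp only [map_add]
        ring
    have hFsmul : ∀ (c : ℂ) x y, F (c • x) y = c * F x y := by
      intro c x y
      simp only [hF, mul_add, Finset.mul_sum, map_smul, smul_eq_mul]
      congr 1
      · refine Finset.sum_congr rfl fun α _ => ?_
        ring
      · refine Finset.sum_congr rfl fun α _ => Finset.sum_congr rfl fun β _ => ?_
        ring
    have hFzero : ∀ y, F 0 y = 0 := by
      intro y
      simpa using hFsmul 0 0 y
    -- values on generators
    have hHH : ∀ x ∈ H, ∀ y ∈ H, -ξ ⁅x, y⁆ = F x y := by
      intro x hx y hy
      rw [habel x hx y hy, hF]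
      have e1 : ∑ α ∈ Rpos, μ α * (α x * ωc α y - α y * ωc α x) = 0 := by
        refine Finset.sum_eq_zero fun α hα => ?_
        rw [hωcH α (hposR α hα) x hx, hωcH α (hposR α hα) y hy]; ring
      have e2 : ∑ α ∈ Rpos, ∑ β ∈ Rpos,
          μ (α + β) * (N α β : ℂ) * (ωc α x * ωc β y - ωc α y * ωc β x) = 0 := by
        refine Finset.sum_eq_zero fun α hα => Finset.sum_eq_zero fun β hβ => ?_
        rw [hωcH α (hposR α hα) x hx, hωcH α (hposR α hα) y hy]; ring
      simp only [e1, e2]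
      simp
    have hHE : ∀ x ∈ H, ∀ γ ∈ Rpos, -ξ ⁅x, E γ⁆ = F x (E γ) := by
      intro x hx γ hγ
      rw [hroot γ (hposR γ hγ) x hx, map_smul, hξE γ hγ, hF]
      simp only
      rw [Finset.sum_eq_single γ, Finset.sum_eq_zero]
      · rw [hωcE γ (hposR γ hγ) γ (hposR γ hγ), hωcH γ (hposR γ hγ) x hx]
        simp [mul_comm]
      · intro α hα
        refine Finset.sum_eq_zero fun β hβ => ?_
        rw [hωcH α (hposR α hα) x hx, hωcH β (hposR β hβ) x hx]; ring
      · intro α hα hne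
        rw [hωcE α (hposR α hα) γ (hposR γ hγ), hωcH α (hposR α hα) x hx, if_neg hne]; ring
      · intro h; exact absurd hγ h
    have hNanti : ∀ γ ∈ R, ∀ δ ∈ R, N δ γ = -N γ δ := by
      intro γ hγ δ hδ
      by_cases h : γ + δ ∈ R
      · have h1 := hbracket γ hγ δ hδ h
        have h' : δ + γ ∈ R := by rwa [add_comm]
        have h2 := hbracket δ hδ γ hγ h'
        rw [← lie_skew, h1, add_comm δ γ, ← neg_smul] at h2
        exact (smul_left_injective ℝ (hEne _ h) h2).symm
      · rw [hN0 γ δ h, hN0 δ γ (by rwa [add_comm]), neg_zero]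
    have hEE : ∀ γ ∈ Rpos, ∀ δ ∈ Rpos, -ξ ⁅E γ, E δ⁆ = F (E γ) (E δ) := by
      intro γ hγ δ hδ
      have hFv : F (E γ) (E δ) = μ (γ + δ) * (N γ δ : ℂ) := by
        have e1 : ∑ α ∈ Rpos, μ α * (α (E γ) * ωc α (E δ) - α (E δ) * ωc α (E γ)) = 0 := by
          refine Finset.sum_eq_zero fun α hα => ?_
          rw [hαE α (hposR α hα) γ (hposR γ hγ), hαE α (hposR α hα) δ (hposR δ hδ)]; ring
        have e2 : ∀ γ ∈ Rpos, ∀ δ ∈ Rpos, ∑ α ∈ Rpos, ∑ β ∈ Rpos,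
            μ (α + β) * (N α β : ℂ) * (ωc α (E γ) * ωc β (E δ)) = μ (γ + δ) * (N γ δ : ℂ) := by
          intro γ hγ δ hδ
          rw [Finset.sum_eq_single γ, Finset.sum_eq_single δ]
          · rw [hωcE γ (hposR γ hγ) γ (hposR γ hγ), hωcE δ (hposR δ hδ) δ (hposR δ hδ)]; simp
          · intro β hβ hne
            rw [hωcE β (hposR β hβ) δ (hposR δ hδ), if_neg hne]; ring
          · intro h; exact absurd hδ h
          · intro α hα hne
            refine Finset.sum_eq_zero fun β hβ => ?_
            rw [hωcE α (hposR α hα) γ (hposR γ hγ), if_neg hne]; ring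
          · intro h; exact absurd hγ h
        rw [hF]
        simp only [mul_sub (μ _ * _), Finset.sum_sub_distrib]
        rw [e1, e2 γ hγ δ hδ, e2 δ hδ γ hγ, hNanti γ (hposR γ hγ) δ (hposR δ hδ), add_comm δ γ]
        push_cast
        ring
      rw [hFv]
      by_cases h : γ + δ ∈ R
      · have hp := hRposClosed γ hγ δ hδ h
        rw [hbracket γ (hposR γ hγ) δ (hposR δ hδ) h, ← Complex.coe_smul, map_smul, hξE _ hp,
          smul_eq_mul]
        ring
      · rw [hbracket0 γ (hposR γ hγ) δ (hposR δ hδ) _ h, hN0 γ δ h]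
        · simp
        · intro h0
          apply hRposDisj γ hγ
          rwa [neg_eq_of_add_eq_zero_right h0]
    have hmem : ∀ x ∈ k, x ∈ Submodule.span ℂ ((h₀ : Set gC) ∪ E '' ↑Rpos) := by
      intro x hx
      rwa [Submodule.span_union, Submodule.span_eq, ← hk]
    have hgen : ∀ x ∈ ((h₀ : Set gC) ∪ E '' ↑Rpos), ∀ y ∈ ((h₀ : Set gC) ∪ E '' ↑Rpos),
        -ξ ⁅x, y⁆ = F x y := by
      rintro x (hx | ⟨γ, hγ, rfl⟩) y (hy | ⟨δ, hδ, rfl⟩)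
      · exact hHH x (hh₀ hx) y (hh₀ hy)
      · exact hHE x (hh₀ hx) δ hδ
      · rw [hFanti, ← hHE y (hh₀ hy) γ hγ, ← lie_skew, map_neg]
      · exact hEE γ hγ δ hδ
    have hlin : ∀ (S : Set gC) (y : gC), (∀ x ∈ S, -ξ ⁅x, y⁆ = F x y) →
        ∀ x ∈ Submodule.span ℂ S, -ξ ⁅x, y⁆ = F x y := by
      intro S y hS x hx
      induction hx using Submodule.span_induction with
      | mem x hx => exact hS x hx
      | zero => rw [hFzero]; simp
      | add a b _ _ ha hb => rw [hFadd, ← ha, ← hb, add_lie, map_add]; ring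
      | smul c a _ ha => rw [hFsmul, ← ha, smul_lie, map_smul, smul_eq_mul]; ring
    intro x hx y hy
    have hfin : -ξ ⁅x, y⁆ = F x y := by
      refine hlin _ y (fun a ha => ?_) x (hmem x hx)
      have := hlin _ a (fun b hb => hgen b hb a ha) y (hmem y hy)
      rw [hFanti, ← this, ← lie_skew, map_neg]
    rw [hfin, hF]
end

section
/- Let n ≥ 3 and let R = {±ε_i ± ε_j : 1 ≤ i < j ≤ n} be the root system of so_{2n}(ℂ) in the dual of its diagonal Cartan subalgebra. Let σ be the involution acting on R induced by the linear map with σ(ε_i) = −ε_i for i < n and σ(ε_n) = ε_n. Call two subsets of R equivalent if one is carried to the other by a composition of the transformations R₀ ↦ −R₀, R₀ ↦ σ(R₀), and R₀ ↦ w(R₀) for elements w of the Weyl group of D_n (signed permutations of ε_1,…,ε_n with an even number of sign changes) commuting with σ. Then every σ-positive system R₀ ⊆ R is equivalent to one of: (a) R⁺ := {ε_i ± ε_j : 1 ≤ i < j ≤ n}; (b) (R⁺ ∖ {ε_{n−1} + ε_n}) ∪ {ε_n − ε_{n−1}}; (c) (R⁺ ∖ {ε_{n−1} − ε_n}) ∪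 {−(ε_{n−1} + ε_n)}. -/
namespace SOSigmaPositive

open Finset

/-- The coordinate functionals `ε_i`, realized as integer vectors. -/
def eps {n : ℕ} (i : Fin n) : Fin n → ℤ := Pi.single i 1

/-- The root system of `so_{2n}(ℂ)`: `R = {±ε_i ± ε_j : i ≠ j}`. -/
def Roots (n : ℕ) : Set (Fin n → ℤ) :=
  {v | ∃ i j : Fin n, i ≠ j ∧
    (v = eps i + eps j ∨ v = eps i - eps j ∨ v = -eps i - eps j)}

/-- The involution `σ` with `σ(ε_i) = -ε_i` for `i < n` and `σ(ε_n) = ε_n`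
(last index fixed). -/
def sigma {m : ℕ} (v : Fin (m + 3) → ℤ) : Fin (m + 3) → ℤ :=
  fun j => if j = Fin.last (m + 2) then v j else -v j

/-- The action of a signed permutation (a permutation `p` together with signs `s`):
`ε_i ↦ s_{p i} ε_{p i}`. -/
def signedPermAct {n : ℕ} (p : Equiv.Perm (Fin n)) (s : Fin n → ℤ)
    (v : Fin n → ℤ) : Fin n → ℤ :=
  fun j => s j * v (p.symm j)

/-- A `σ`-positive system: a closed subset `R₀ ⊆ R` with `R₀ ∪ σ(R₀) = R` and
`R₀ ∩ σ(R₀) = ∅`. -/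
def IsSigmaPositive {m : ℕ} (R₀ : Set (Fin (m + 3) → ℤ)) : Prop :=
  R₀ ⊆ Roots (m + 3)
  ∧ (∀ α ∈ R₀, ∀ β ∈ R₀, α + β ∈ Roots (m + 3) → α + β ∈ R₀)
  ∧ R₀ ∪ sigma '' R₀ = Roots (m + 3)
  ∧ R₀ ∩ sigma '' R₀ = ∅

/-- Two subsets of `R` are equivalent if one is carried to the other by a composition
of the transformations `R₀ ↦ -R₀`, `R₀ ↦ σ(R₀)` and `R₀ ↦ w(R₀)` for elements `w` of
the Weyl group of `D_n` (signed permutations with an even number of sign changes)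
commuting with `σ`. -/
def Equivalent {m : ℕ} (R₀ R₁ : Set (Fin (m + 3) → ℤ)) : Prop :=
  ∃ (s₁ s₂ : Bool) (p : Equiv.Perm (Fin (m + 3))) (s : Fin (m + 3) → ℤ),
    (∀ i, s i = 1 ∨ s i = -1)
    ∧ (∏ i, s i) = 1
    ∧ (∀ v, signedPermAct p s (sigma v) = sigma (signedPermAct p s v))
    ∧ R₁ = (fun v => if s₁ then -v else v) ''
        ((fun v => if s₂ then sigma v else v) '' (signedPermAct p s '' R₀))

/-- The positive system `R⁺ = {ε_i ± ε_j : i < j}`. -/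
def Rplus (n : ℕ) : Set (Fin n → ℤ) :=
  {v | ∃ i j : Fin n, i < j ∧ (v = eps i + eps j ∨ v = eps i - eps j)}

/-- System (b): `(R⁺ ∖ {ε_{n-1} + ε_n}) ∪ {ε_n − ε_{n-1}}`. -/
def typeB (m : ℕ) : Set (Fin (m + 3) → ℤ) :=
  (Rplus (m + 3) \ {eps ⟨m + 1, by omega⟩ + eps (Fin.last (m + 2))})
    ∪ {eps (Fin.last (m + 2)) - eps ⟨m + 1, by omega⟩}

/-- System (c): `(R⁺ ∖ {ε_{n-1} − ε_n}) ∪ {−(ε_{n-1} + ε_n)}`. -/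
def typeC (m : ℕ) : Set (Fin (m + 3) → ℤ) :=
  (Rplus (m + 3) \ {eps ⟨m + 1, by omega⟩ - eps (Fin.last (m + 2))})
    ∪ {-(eps ⟨m + 1, by omega⟩ + eps (Fin.last (m + 2)))}

/-- The vector `x ε_i + y ε_j`. -/
def rt {n : ℕ} (i j : Fin n) (x y : ℤ) : Fin n → ℤ := x • eps i + y • eps j

lemma rt_apply {n : ℕ} (i j : Fin n) (x y : ℤ) (l : Fin n) :
    rt i j x y l = (if l = i then x else 0) + (if l = j then y else 0) := by
  simp [rt, eps, Pi.single_apply]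

lemma rt_comm {n : ℕ} (i j : Fin n) (x y : ℤ) : rt i j x y = rt j i y x := by
  unfold rt; exact add_comm _ _

lemma rt_root {n : ℕ} {i j : Fin n} (h : i ≠ j) {x y : ℤ} (hx : x = 1 ∨ x = -1)
    (hy : y = 1 ∨ y = -1) : rt i j x y ∈ Roots n := by
  unfold rt
  rcases hx with rfl | rfl <;> rcases hy with rfl | rfl
  · exact ⟨i, j, h, Or.inl (by module)⟩
  · exact ⟨i, j, h, Or.inr (Or.inl (by module))⟩
  · exact ⟨j, i, h.symm, Or.inr (Or.inl (by module))⟩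
  · exact ⟨i, j, h, Or.inr (Or.inr (by module))⟩

lemma root_rt {n : ℕ} {v : Fin n → ℤ} (hv : v ∈ Roots n) :
    ∃ i j : Fin n, i < j ∧ ∃ x y : ℤ, (x = 1 ∨ x = -1) ∧ (y = 1 ∨ y = -1) ∧ v = rt i j x y := by
  have key : ∃ i j : Fin n, i ≠ j ∧ ∃ x y : ℤ, (x = 1 ∨ x = -1) ∧ (y = 1 ∨ y = -1) ∧
      v = rt i j x y := by
    obtain ⟨i, j, h, rfl | rfl | rfl⟩ := hv
    · exact ⟨i, j, h, 1, 1, by simp, by simp, by unfold rt; module⟩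
    · exact ⟨i, j, h, 1, -1, by simp, by simp, by unfold rt; module⟩
    · exact ⟨i, j, h, -1, -1, by simp, by simp, by unfold rt; module⟩
  obtain ⟨i, j, h, x, y, hx, hy, rfl⟩ := key
  rcases lt_or_gt_of_ne h with h | h
  · exact ⟨i, j, h, x, y, hx, hy, rfl⟩
  · exact ⟨j, i, h, y, x, hy, hx, rt_comm _ _ _ _⟩

lemma sigma_rt {m : ℕ} {i j : Fin (m + 3)} (hi : i ≠ Fin.last (m + 2))
    (hj : j ≠ Fin.last (m + 2)) (x y : ℤ) : sigma (rt i j x y) = rt i j (-x) (-y) := by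
  funext l
  simp only [sigma, rt_apply]
  grind

lemma sigma_rt_last {m : ℕ} {i : Fin (m + 3)} (hi : i ≠ Fin.last (m + 2)) (x y : ℤ) :
    sigma (rt i (Fin.last (m + 2)) x y) = rt i (Fin.last (m + 2)) (-x) y := by
  funext l
  simp only [sigma, rt_apply]
  grind

lemma sigma_sigma {m : ℕ} (v : Fin (m + 3) → ℤ) : sigma (sigma v) = v := by
  funext l
  simp only [sigma]
  grind

lemma rt_inj {n : ℕ} {i j i' j' : Fin n} {y y' : ℤ} (h : i < j) (h' : i' < j')
    (hy : y = 1 ∨ y = -1) (hy' : y' = 1 ∨ y' = -1) (he : rt i j 1 y = rt i' j' 1 y') :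
    i = i' ∧ j = j' ∧ y = y' := by
  have e1 := congrFun he i
  have e2 := congrFun he i'
  have e3 := congrFun he j
  have e4 := congrFun he j'
  simp only [rt_apply] at e1 e2 e3 e4
  have hi : i = i' := by
    rcases lt_trichotomy i i' with hh | hh | hh
    · grind
    · exact hh
    · grind
  subst hi
  grind

/-- Sorting a strict total order. -/
lemma exists_sort {n : ℕ} (r : Fin n → Fin n → Prop) (hirr : ∀ i, ¬ r i i)
    (htr : ∀ i j k, r i j → r j k → r i k) (htot : ∀ i j, i ≠ j → r i j ∨ r j i) :
    ∃ p : Equiv.Perm (Fin n), ∀ i j, r i j → p i < p j := by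
  classical
  have hlt : ∀ i, (univ.filter (fun j => r j i)).card < n := by
    intro i
    have : (univ.filter (fun j => r j i)) ⊂ univ := by
      rw [Finset.ssubset_univ_iff]
      intro h
      have := Finset.mem_univ i
      rw [← h] at this
      simp [hirr] at this
    simpa using Finset.card_lt_card this
  let f : Fin n → Fin n := fun i => ⟨_, hlt i⟩
  have hf : ∀ i j, r i j → f i < f j := by
    intro i j hij
    rw [Fin.lt_def]
    change (univ.filter (fun l => r l i)).card < (univ.filter (fun l => r l j)).card
    apply Finset.card_lt_card
    rw [Finset.ssubset_iff_of_subset]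
    · exact ⟨i, by simpa using hij, by simp [hirr]⟩
    · intro k hk
      simp only [mem_filter, mem_univ, true_and] at hk ⊢
      exact htr _ _ _ hk hij
  have hinj : Function.Injective f := by
    intro i j hij
    by_contra hne
    rcases htot i j hne with h | h
    · exact absurd (hf _ _ h) (by simp [hij])
    · exact absurd (hf _ _ h) (by simp [hij])
  exact ⟨Equiv.ofBijective f (Finite.injective_iff_bijective.mp hinj), hf⟩

lemma act_rt {n : ℕ} (p : Equiv.Perm (Fin n)) (s : Fin n → ℤ) (i j : Fin n) (x y : ℤ) :
    signedPermAct p s (rt (p.symm i) (p.symm j) x y) = rt i j (s i * x) (s j * y) := by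
  funext l
  simp only [signedPermAct, rt_apply, EmbeddingLike.apply_eq_iff_eq]
  grind

lemma act_comm {m : ℕ} (p : Equiv.Perm (Fin (m + 3))) (s : Fin (m + 3) → ℤ)
    (hp : p.symm (Fin.last (m + 2)) = Fin.last (m + 2)) (v : Fin (m + 3) → ℤ) :
    signedPermAct p s (sigma v) = sigma (signedPermAct p s v) := by
  funext l
  have : p.symm l = Fin.last (m + 2) ↔ l = Fin.last (m + 2) := by
    constructor
    · intro h; exact p.symm.injective (h.trans hp.symm)
    · rintro rfl; exact hp
  simp only [signedPermAct, sigma, this]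
  split_ifs <;> ring

lemma act_inj {n : ℕ} (p : Equiv.Perm (Fin n)) (s : Fin n → ℤ) (hs : ∀ i, s i = 1 ∨ s i = -1)
    {u v : Fin n → ℤ} (h : signedPermAct p s u = signedPermAct p s v) : u = v := by
  funext l
  have := congrFun h (p l)
  simp only [signedPermAct, Equiv.symm_apply_apply] at this
  rcases hs (p l) with h | h <;> rw [h] at this <;> linarith

lemma equiv_of {m : ℕ} {R₀ T : Set (Fin (m + 3) → ℤ)} (hR : IsSigmaPositive R₀)
    (p : Equiv.Perm (Fin (m + 3))) (s : Fin (m + 3) → ℤ) (hs : ∀ i, s i = 1 ∨ s i = -1)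
    (hprod : ∏ i, s i = 1) (hp : p.symm (Fin.last (m + 2)) = Fin.last (m + 2))
    (hT : Roots (m + 3) ⊆ T ∪ sigma '' T) (hsub : T ⊆ signedPermAct p s '' R₀) :
    Equivalent R₀ T := by
  refine ⟨false, false, p, s, hs, hprod, act_comm p s hp, ?_⟩
  simp only [Bool.false_eq_true, if_false, Set.image_id']
  refine Set.Subset.antisymm hsub ?_
  rintro _ ⟨r, hr, rfl⟩
  obtain ⟨h1, h2, h3, h4⟩ := hR
  have hroot : signedPermAct p s r ∈ Roots (m + 3) := by
    obtain ⟨i, j, hij, x, y, hx, hy, rfl⟩ := root_rt (h1 hr)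
    have := act_rt p s (p i) (p j) x y
    simp only [Equiv.symm_apply_apply] at this
    rw [this]
    apply rt_root
    · simpa using hij.ne
    · rcases hx with rfl | rfl <;> rcases hs (p i) with h | h <;> simp [h]
    · rcases hy with rfl | rfl <;> rcases hs (p j) with h | h <;> simp [h]
  rcases hT hroot with h | ⟨t, ht, hte⟩
  · exact h
  · exfalso
    obtain ⟨u, hu, rfl⟩ := hsub ht
    rw [← act_comm p s hp] at hte
    have := act_inj p s hs hte
    have : r ∈ R₀ ∩ sigma '' R₀ := ⟨hr, u, hu, this⟩
    rw [h4] at this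
    exact this

/-- A set containing a suitable half of the roots covers everything together with `σ`. -/
lemma cover {m : ℕ} {T : Set (Fin (m + 3) → ℤ)}
    (h : ∀ i j : Fin (m + 3), i < j → j ≠ Fin.last (m + 2) → ∀ y : ℤ, (y = 1 ∨ y = -1) →
      rt i j 1 y ∈ T)
    (h' : ∀ i : Fin (m + 3), i ≠ Fin.last (m + 2) → ∀ y : ℤ, (y = 1 ∨ y = -1) →
      rt i (Fin.last (m + 2)) 1 y ∈ T ∨ rt i (Fin.last (m + 2)) (-1) y ∈ T) :
    Roots (m + 3) ⊆ T ∪ sigma '' T := by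
  intro v hv
  obtain ⟨i, j, hij, x, y, hx, hy, rfl⟩ := root_rt hv
  have hi : i ≠ Fin.last (m + 2) := (lt_of_lt_of_le hij (Fin.le_last j)).ne
  by_cases hj : j = Fin.last (m + 2)
  · subst hj
    rcases hx with rfl | rfl <;> rcases h' i hi y hy with h | h
    · exact Or.inl h
    · exact Or.inr ⟨_, h, by rw [sigma_rt_last hi]; simp⟩
    · exact Or.inr ⟨_, h, by rw [sigma_rt_last hi]⟩
    · exact Or.inl h
  · rcases hx with rfl | rfl
    · exact Or.inl (h i j hij hj y hy)
    · exact Or.inr ⟨_, h i j hij hj (-y) (by rcases hy with rfl | rfl <;> simp), by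
        rw [sigma_rt hi hj]; simp⟩

lemma mem_Rplus {n : ℕ} {i j : Fin n} (h : i < j) {y : ℤ} (hy : y = 1 ∨ y = -1) :
    rt i j 1 y ∈ Rplus n := by
  rcases hy with rfl | rfl
  · exact ⟨i, j, h, Or.inl (by unfold rt; module)⟩
  · exact ⟨i, j, h, Or.inr (by unfold rt; module)⟩

lemma Rplus_rt {n : ℕ} {v : Fin n → ℤ} (h : v ∈ Rplus n) :
    ∃ i j : Fin n, i < j ∧ ∃ y : ℤ, (y = 1 ∨ y = -1) ∧ v = rt i j 1 y := by
  obtain ⟨i, j, h, rfl | rfl⟩ := h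
  · exact ⟨i, j, h, 1, by simp, by unfold rt; module⟩
  · exact ⟨i, j, h, -1, by simp, by unfold rt; module⟩

/-- The index `n - 1`. -/
def pen (m : ℕ) : Fin (m + 3) := ⟨m + 1, by omega⟩

lemma pen_lt (m : ℕ) : pen m < Fin.last (m + 2) := by
  simp [pen, Fin.lt_def]

lemma typeB_eq (m : ℕ) : typeB m = (Rplus (m + 3) \ {rt (pen m) (Fin.last (m + 2)) 1 1}) ∪
    {rt (pen m) (Fin.last (m + 2)) (-1) 1} := by
  have e1 : rt (pen m) (Fin.last (m + 2)) 1 1 =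
    eps ⟨m + 1, by omega⟩ + eps (Fin.last (m + 2)) := by unfold rt pen; module
  have e2 : rt (pen m) (Fin.last (m + 2)) (-1) 1 =
    eps (Fin.last (m + 2)) - eps ⟨m + 1, by omega⟩ := by unfold rt pen; module
  rw [e1, e2]; rfl

lemma typeC_eq (m : ℕ) : typeC m = (Rplus (m + 3) \ {rt (pen m) (Fin.last (m + 2)) 1 (-1)}) ∪
    {rt (pen m) (Fin.last (m + 2)) (-1) (-1)} := by
  have e1 : rt (pen m) (Fin.last (m + 2)) 1 (-1) =
    eps ⟨m + 1, by omega⟩ - eps (Fin.last (m + 2)) := by unfold rt pen; module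
  have e2 : rt (pen m) (Fin.last (m + 2)) (-1) (-1) =
    -(eps ⟨m + 1, by omega⟩ + eps (Fin.last (m + 2))) := by unfold rt pen; module
  rw [e1, e2]; rfl

/-- Common form of systems (b) and (c). -/
def typeZ (m : ℕ) (z : ℤ) : Set (Fin (m + 3) → ℤ) :=
  (Rplus (m + 3) \ {rt (pen m) (Fin.last (m + 2)) 1 z}) ∪
    {rt (pen m) (Fin.last (m + 2)) (-1) z}

lemma cover_plus (m : ℕ) : Roots (m + 3) ⊆ Rplus (m + 3) ∪ sigma '' Rplus (m + 3) :=
  cover (fun _ _ h _ _ hy => mem_Rplus h hy)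
    (fun _ hi _ hy => Or.inl (mem_Rplus (Fin.lt_last_iff_ne_last.mpr hi) hy))

lemma cover_Z (m : ℕ) (z : ℤ) (hz : z = 1 ∨ z = -1) :
    Roots (m + 3) ⊆ typeZ m z ∪ sigma '' typeZ m z := by
  apply cover
  · intro i j h hj y hy
    refine Or.inl ⟨mem_Rplus h hy, ?_⟩
    intro he
    exact hj (rt_inj h (pen_lt m) hy hz he).2.1
  · intro i hi y hy
    have hlt := Fin.lt_last_iff_ne_last.mpr hi
    by_cases hc : i = pen m ∧ y = z
    · obtain ⟨rfl, rfl⟩ := hc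
      exact Or.inr (Or.inr rfl)
    · refine Or.inl (Or.inl ⟨mem_Rplus hlt hy, ?_⟩)
      intro he
      have := rt_inj hlt (pen_lt m) hy hz he
      exact hc ⟨this.1, this.2.2⟩

theorem sigma_positive_classification (m : ℕ)
    (R₀ : Set (Fin (m + 3) → ℤ)) (hR₀ : IsSigmaPositive R₀) :
    Equivalent R₀ (Rplus (m + 3)) ∨ Equivalent R₀ (typeB m) ∨ Equivalent R₀ (typeC m) := by
  classical
  have hR := hR₀
  obtain ⟨h1, h2, h3, h4⟩ := hR₀
  set L := Fin.last (m + 2) with hL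
  have hor : ∀ v ∈ Roots (m + 3), v ∈ R₀ ∨ sigma v ∈ R₀ := by
    intro v hv
    rw [← h3] at hv
    rcases hv with h | ⟨u, hu, rfl⟩
    · exact Or.inl h
    · right; rwa [sigma_sigma]
  have hnot : ∀ v ∈ R₀, sigma v ∉ R₀ := by
    intro v hv hs
    have : v ∈ R₀ ∩ sigma '' R₀ := ⟨hv, sigma v, hs, sigma_sigma v⟩
    rw [h4] at this
    exact this
  let a : Fin (m + 3) → ℤ := fun i => if rt i L 1 1 ∈ R₀ then 1 else -1
  have ha : ∀ i, a i = 1 ∨ a i = -1 := by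
    intro i; simp only [a]; split_ifs <;> simp
  let c : Fin (m + 3) → ℤ := fun i => if i = L then ∏ j ∈ univ.erase L, a j else a i
  have hprodpm : ∀ S : Finset (Fin (m + 3)), (∏ j ∈ S, a j) = 1 ∨ (∏ j ∈ S, a j) = -1 := by
    intro S
    induction S using Finset.induction_on with
    | empty => simp
    | insert i S hi ih =>
      rw [Finset.prod_insert hi]
      rcases ha i with h | h <;> rcases ih with h' | h' <;> simp [h, h']
  have hc : ∀ i, c i = 1 ∨ c i = -1 := by
    intro i
    simp only [c]
    split_ifs
    · exact hprodpm _
    · exact ha i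
  have hcn : ∀ i, -c i = 1 ∨ -c i = -1 := by
    intro i; rcases hc i with h | h <;> simp [h]
  have hcc : ∀ i, c i * c i = 1 := by
    intro i; rcases hc i with h | h <;> simp [h]
  have hcprod : ∏ i, c i = 1 := by
    rw [← Finset.mul_prod_erase univ c (Finset.mem_univ L)]
    have e : ∏ j ∈ univ.erase L, c j = c L := by
      have : c L = ∏ j ∈ univ.erase L, a j := by simp [c]
      rw [this]
      apply Finset.prod_congr rfl
      intro j hj
      simp [c, (Finset.mem_erase.mp hj).1]
    rw [e, hcc]
  -- the positive part with `ε_n`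
  have F3 : ∀ i, i ≠ L → rt i L (c i) 1 ∈ R₀ := by
    intro i hi
    have : c i = a i := by simp [c, hi]
    rw [this]
    simp only [a]
    split_ifs with h
    · exact h
    · rcases hor _ (rt_root hi (Or.inl rfl) (Or.inl rfl)) with h' | h'
      · exact absurd h' h
      · rwa [sigma_rt_last hi] at h'
  have F5 : ∀ i, i ≠ L → rt i L (c i) (-1) ∈ R₀ ∨ rt i L (-c i) (-1) ∈ R₀ := by
    intro i hi
    rcases hor _ (rt_root hi (hc i) (Or.inr rfl)) with h' | h'
    · exact Or.inl h'
    · right; rwa [sigma_rt_last hi] at h'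
  have comb : ∀ i j k, i ≠ j → ∀ x y z : ℤ, (x = 1 ∨ x = -1) → (y = 1 ∨ y = -1) →
      rt i k x z ∈ R₀ → rt j k y (-z) ∈ R₀ → rt i j x y ∈ R₀ := by
    intro i j k hij x y z hx hy hi hj
    have e : rt i k x z + rt j k y (-z) = rt i j x y := by unfold rt; module
    rw [← e]
    exact h2 _ hi _ hj (by rw [e]; exact rt_root hij hx hy)
  have F1 : ∀ i j, i ≠ L → j ≠ L → i ≠ j → rt i j (c i) (c j) ∈ R₀ := by
    intro i j hi hj hij
    rcases F5 j hj with h | h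
    · exact comb i j L hij _ _ 1 (hc i) (hc j) (F3 i hi) h
    rcases F5 i hi with h' | h'
    · rw [rt_comm]
      exact comb j i L hij.symm _ _ 1 (hc j) (hc i) (F3 j hj) h'
    exfalso
    have A := comb i j L hij _ _ 1 (hc i) (hcn j) (F3 i hi) h
    have B := comb j i L hij.symm _ _ 1 (hc j) (hcn i) (F3 j hj) h'
    apply hnot _ A
    rw [sigma_rt hi hj, neg_neg, rt_comm]
    exact B
  -- the order
  let r : Fin (m + 3) → Fin (m + 3) → Prop := fun i j =>
    i ≠ L ∧ i ≠ j ∧ (j = L ∨ rt i j (c i) (-c j) ∈ R₀)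
  obtain ⟨p, hp⟩ := exists_sort r (fun i h => h.2.1 rfl)
    (by
      rintro i j k ⟨hi, hij, h⟩ ⟨hj, hjk, h'⟩
      have h := h.resolve_left hj
      by_cases hk : k = L
      · exact ⟨hi, by rw [hk]; exact hi, Or.inl hk⟩
      have h' := h'.resolve_left hk
      have hik : i ≠ k := by
        rintro rfl
        apply hnot _ h
        rw [sigma_rt hi hj, neg_neg, rt_comm]
        exact h'
      refine ⟨hi, hik, Or.inr ?_⟩
      rw [rt_comm j k] at h'
      exact comb i k j hik _ _ (-c j) (hc i) (hcn k) h (by rwa [neg_neg]))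
    (by
      intro i j hij
      by_cases hi : i = L
      · exact Or.inr ⟨by rw [← hi]; exact hij.symm, hij.symm, Or.inl hi⟩
      by_cases hj : j = L
      · exact Or.inl ⟨hi, hij, Or.inl hj⟩
      rcases hor _ (rt_root hij (hc i) (hcn j)) with h | h
      · exact Or.inl ⟨hi, hij, Or.inr h⟩
      · right
        rw [sigma_rt hi hj, neg_neg, rt_comm] at h
        exact ⟨hj, hij.symm, Or.inr h⟩)
  have hpL : p.symm L = L := by
    by_contra h
    have := hp (p.symm L) L ⟨h, h, Or.inl rfl⟩
    rw [Equiv.apply_symm_apply] at this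
    exact absurd this (not_lt.mpr (Fin.le_last _))
  have hqL : ∀ i, i ≠ L → p.symm i ≠ L := by
    intro i hi h
    exact hi (p.symm.injective (h.trans hpL.symm))
  have hq : ∀ i j, i < j → j ≠ L → rt (p.symm i) (p.symm j) (c (p.symm i)) (-c (p.symm j)) ∈ R₀ := by
    intro i j hij hj
    have hi : i ≠ L := (lt_of_lt_of_le hij (Fin.le_last j)).ne
    have hne : p.symm i ≠ p.symm j := by simpa using hij.ne
    rcases hor _ (rt_root hne (hc (p.symm i)) (hcn (p.symm j))) with h | h
    · exact h
    · exfalso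
      rw [sigma_rt (hqL i hi) (hqL j hj), neg_neg, rt_comm] at h
      have := hp (p.symm j) (p.symm i) ⟨hqL j hj, hne.symm, Or.inr h⟩
      simp only [Equiv.apply_symm_apply] at this
      exact absurd this (not_lt.mpr hij.le)
  let s : Fin (m + 3) → ℤ := fun j => c (p.symm j)
  have hs : ∀ i, s i = 1 ∨ s i = -1 := fun i => hc _
  have hsprod : ∏ i, s i = 1 := by
    rw [← hcprod]; exact Equiv.prod_comp p.symm c
  have img : ∀ i j x y, rt (p.symm i) (p.symm j) (s i * x) (s j * y) ∈ R₀ →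
      rt i j x y ∈ signedPermAct p s '' R₀ := by
    intro i j x y h
    refine ⟨_, h, ?_⟩
    rw [act_rt, ← mul_assoc, ← mul_assoc, hcc, hcc, one_mul, one_mul]
  -- roots not involving the last coordinate
  have inner_mem : ∀ i j, i < j → j ≠ L → ∀ y : ℤ, (y = 1 ∨ y = -1) →
      rt i j 1 y ∈ signedPermAct p s '' R₀ := by
    intro i j hij hj y hy
    have hi : i ≠ L := (lt_of_lt_of_le hij (Fin.le_last j)).ne
    have hne : p.symm i ≠ p.symm j := by simpa using hij.ne
    apply img
    rcases hy with rfl | rfl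
    · simpa using F1 _ _ (hqL i hi) (hqL j hj) hne
    · simpa using hq i j hij hj
  have outer_mem : ∀ i x y, rt (p.symm i) L (s i * x) (c L * y) ∈ R₀ →
      rt i L x y ∈ signedPermAct p s '' R₀ := by
    intro i x y h
    apply img
    simpa [s, hpL] using h
  by_cases hbad : ∃ k, k ≠ L ∧ rt k L (c k) (-1) ∉ R₀
  · right
    obtain ⟨k, hk, hkb⟩ := hbad
    have hkb' := (F5 k hk).resolve_left hkb
    have hlast : ∀ j, j ≠ L → j ≠ k → rt j k (c j) (-c k) ∈ R₀ := by
      intro j hj hjk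
      exact comb j k L hjk _ _ 1 (hc j) (hcn k) (F3 j hj) hkb'
    have hgood : ∀ j, j ≠ L → j ≠ k → rt j L (c j) (-1) ∈ R₀ := by
      intro j hj hjk
      refine (F5 j hj).resolve_right ?_
      intro h
      have A := hlast j hj hjk
      have B := comb k j L hjk.symm _ _ 1 (hc k) (hcn j) (F3 k hk) h
      apply hnot _ A
      rw [sigma_rt hj hk, neg_neg, rt_comm]
      exact B
    have hpen : p.symm (pen m) = k := by
      by_contra h
      have hn := hqL _ (pen_lt m).ne
      have A := hp _ _ ⟨hn, h, Or.inr (hlast _ hn h)⟩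
      have B := hp k L ⟨hk, hk, Or.inl rfl⟩
      have C := Fin.le_last (p L)
      rw [Equiv.apply_symm_apply] at A
      simp only [Fin.lt_def, Fin.le_def, pen, Fin.val_last] at A B C
      omega
    -- the value of the exceptional sign
    have main : Equivalent R₀ (typeZ m (-c L)) := by
      refine equiv_of hR p s hs hsprod hpL (cover_Z m _ (hcn L)) ?_
      rintro v (⟨hv, hne⟩ | rfl)
      · obtain ⟨i, j, hij, y, hy, rfl⟩ := Rplus_rt hv
        by_cases hj : j = L
        · subst hj
          have hi := hij.ne
          apply outer_mem
          rw [mul_one]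
          by_cases hy' : y = c L
          · rw [hy', hcc]; exact F3 _ (hqL i hi)
          · have hy2 : y = -c L := by
              rcases hy with h | h <;> rcases hc L with h' | h' <;> simp_all
            subst hy2
            rw [mul_neg, hcc]
            apply hgood _ (hqL i hi)
            intro he
            apply hne
            have : i = pen m := p.symm.injective (he.trans hpen.symm)
            rw [this]; rfl
        · exact inner_mem i j hij hj y hy
      · apply outer_mem
        rw [mul_neg, mul_neg, hcc, mul_one]
        simp only [s, hpen]
        exact hkb'
    rcases hc L with h | h
    · right; rw [h] at main; rw [typeC_eq]; exact main
    · left; rw [h, neg_neg] at main; rw [typeB_eq]; exact main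
  · left
    push Not at hbad
    refine equiv_of hR p s hs hsprod hpL (cover_plus m) ?_
    intro v hv
    obtain ⟨i, j, hij, y, hy, rfl⟩ := Rplus_rt hv
    by_cases hj : j = L
    · subst hj
      have hi := hij.ne
      apply outer_mem
      rw [mul_one]
      have : c L * y = 1 ∨ c L * y = -1 := by
        rcases hy with h | h <;> rcases hc L with h' | h' <;> simp [h, h']
      rcases this with h | h <;> rw [h]
      · exact F3 _ (hqL i hi)
      · exact hbad _ (hqL i hi)
    · exact inner_mem i j hij hj y hy

end SOSigmaPositive
end

section
/- Let R be the root system of E₆ realized in the dual of ℂ⁶: R = {±(ε_i − ε_j) : 1 ≤ i < j ≤ 6} ∪ {±(ε_i + ε_j + ε_k) : 1 ≤ i < j < k ≤ 6} ∪ {±(ε₁ + ⋯ + ε₆)}. Let θ be the linear involution of the span of R determined on the simple roots by θ(ε₁−ε₂) = ε₅−ε₆, θ(ε₂−ε₃) = ε₄−ε₅, θ(ε₃−ε₄) = ε₃−ε₄, θ(ε₄−ε₅) = ε₂−ε₃, θ(ε₅−ε₆) = ε₁−ε₂, θ(ε₄+ε₅+ε₆) = ε₄+ε₅+ε₆, and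 let σ act on R by σ(α) = −θ(α). If R₀ ⊆ R is a σ-positive system containing {±(ε_i − ε_j) : 1 ≤ i < j ≤ 3} ∪ {ε₃ − ε₄, ε₄ + ε₅ + ε₆}, then R₀ = {±(ε_i − ε_j) : 1 ≤ i < j ≤ 3} ∪ {ε_i − ε_j : i ≤ 3 < j ≤ 6} ∪ {ε_i + ε_j + ε_k : 1 ≤ i < j < k ≤ 6} ∪ {ε₁ + ⋯ + ε₆}. -/
namespace E6SigmaPositive

open Finset

/-- The coordinate functionals `ε_i` on `ℂ⁶`, realized as rational vectors. -/
def eps (i : Fin 6) : Fin 6 → ℚ := Pi.single i 1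

/-- The vector `ε₁ + ⋯ + ε₆`. -/
def ones : Fin 6 → ℚ := fun _ => 1

/-- The root system of `E₆`:
`R = {±(ε_i − ε_j)} ∪ {±(ε_i + ε_j + ε_k)} ∪ {±(ε₁ + ⋯ + ε₆)}`. -/
def Roots : Set (Fin 6 → ℚ) :=
  {v | ∃ i j : Fin 6, i ≠ j ∧ v = eps i - eps j}
  ∪ {v | ∃ i j k : Fin 6, i < j ∧ j < k ∧
      (v = eps i + eps j + eps k ∨ v = -(eps i + eps j + eps k))}
  ∪ {ones, -ones}

/-- The linear involution `θ` of the span of `R` determined by the horizontal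
reversal of the Dynkin diagram of `E₆`; on the basis it is given by
`θ(ε_i) = (ε₁ + ⋯ + ε₆)/3 − ε_{7−i}`. -/
def theta (v : Fin 6 → ℚ) : Fin 6 → ℚ :=
  fun j => (∑ i, v i) / 3 - v j.rev

/-- The involution `σ(α) = -θ(α)`. -/
def sigma (v : Fin 6 → ℚ) : Fin 6 → ℚ := -theta v

/-- A `σ`-positive system: a closed subset `R₀ ⊆ R` with `R₀ ∪ σ(R₀) = R` and
`R₀ ∩ σ(R₀) = ∅`. -/
def IsSigmaPositive (R₀ : Set (Fin 6 → ℚ)) : Prop :=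
  R₀ ⊆ Roots
  ∧ (∀ α ∈ R₀, ∀ β ∈ R₀, α + β ∈ Roots → α + β ∈ R₀)
  ∧ R₀ ∪ sigma '' R₀ = Roots
  ∧ R₀ ∩ sigma '' R₀ = ∅

/-- The set `{±(ε_i − ε_j) : 1 ≤ i < j ≤ 3} ∪ {ε₃ − ε₄, ε₄ + ε₅ + ε₆}`
(in 1-based notation). -/
def baseSet : Set (Fin 6 → ℚ) :=
  {v | ∃ i j : Fin 6, i < j ∧ (j : ℕ) ≤ 2 ∧ (v = eps i - eps j ∨ v = eps j - eps i)}
  ∪ {eps 2 - eps 3, eps 3 + eps 4 + eps 5}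

/-- The system `R₀⁽¹⁾ = {±(ε_i − ε_j) : 1 ≤ i < j ≤ 3} ∪ {ε_i − ε_j : i ≤ 3 < j}
∪ {ε_i + ε_j + ε_k} ∪ {ε₁ + ⋯ + ε₆}` (in 1-based notation). -/
def R01 : Set (Fin 6 → ℚ) :=
  {v | ∃ i j : Fin 6, i < j ∧ (j : ℕ) ≤ 2 ∧ (v = eps i - eps j ∨ v = eps j - eps i)}
  ∪ {v | ∃ i j : Fin 6, (i : ℕ) ≤ 2 ∧ 3 ≤ (j : ℕ) ∧ v = eps i - eps j}
  ∪ {v | ∃ i j k : Fin 6, i < j ∧ j < k ∧ v = eps i + eps j + eps k}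
  ∪ {ones}

theorem eps_apply (i m : Fin 6) : eps i m = if m = i then 1 else 0 := by
  simp [eps, Pi.single_apply]

theorem sum_eps (i : Fin 6) : ∑ m, eps i m = 1 := by
  simp [eps_apply]

theorem sigma_apply (v : Fin 6 → ℚ) (m : Fin 6) :
    sigma v m = v m.rev - (∑ i, v i) / 3 := by
  simp [sigma, theta]

theorem sigma_sigma (v : Fin 6 → ℚ) : sigma (sigma v) = v := by
  funext m
  have h : ∑ i, v (Fin.rev i) = ∑ i, v i := Equiv.sum_comp Fin.revPerm v
  rw [sigma_apply, sigma_apply, Fin.rev_rev]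
  simp only [sigma_apply, Finset.sum_sub_distrib, h]
  simp
  ring

theorem sigma_diff (i j : Fin 6) : sigma (eps i - eps j) = eps i.rev - eps j.rev := by
  funext m
  have h : ∀ a : Fin 6, (m.rev = a) = (m = a.rev) := by
    intro a
    rw [Fin.rev_eq_iff]
  rw [sigma_apply]
  simp [Finset.sum_sub_distrib, sum_eps, eps_apply, h]

theorem sigma_neg_ones : sigma (-ones) = ones := by
  funext m
  rw [sigma_apply]
  simp [ones]
  norm_num

theorem compl_triple : ∀ i j k : Fin 6, i < j → j < k → ∃ a b c : Fin 6, a < b ∧ b < c ∧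
    ∀ m : Fin 6, (if m.rev = i then 1 else 0) + (if m.rev = j then 1 else 0)
      + (if m.rev = k then 1 else 0) + (if m = a then 1 else 0) + (if m = b then 1 else 0)
      + (if m = c then 1 else 0) = (1 : ℕ) := by
  decide +kernel

theorem sigma_neg_triple (i j k : Fin 6) (hij : i < j) (hjk : j < k) :
    ∃ a b c : Fin 6, a < b ∧ b < c ∧
      sigma (-(eps i + eps j + eps k)) = eps a + eps b + eps c := by
  obtain ⟨a, b, c, hab, hbc, h⟩ := compl_triple i j k hij hjk
  refine ⟨a, b, c, hab, hbc, ?_⟩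
  funext m
  have hm : (((if m.rev = i then 1 else 0) + (if m.rev = j then 1 else 0)
      + (if m.rev = k then 1 else 0) + (if m = a then 1 else 0) + (if m = b then 1 else 0)
      + (if m = c then 1 else 0) : ℕ) : ℚ) = 1 := by rw [h m]; simp
  push_cast at hm
  have hs : ∑ l, (-(eps i + eps j + eps k)) l = -3 := by
    simp only [Pi.neg_apply, Pi.add_apply, Finset.sum_neg_distrib, Finset.sum_add_distrib,
      sum_eps]
    norm_num
  rw [sigma_apply, hs]
  simp only [Pi.neg_apply, Pi.add_apply, eps_apply]
  linarith

/-- Every root lies in `R01` or is mapped into it by `σ`. -/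
theorem roots_cover (v : Fin 6 → ℚ) (hv : v ∈ Roots) : v ∈ R01 ∨ sigma v ∈ R01 := by
  rcases hv with (⟨i, j, hij, rfl⟩ | ⟨i, j, k, hij, hjk, rfl | rfl⟩) | rfl | rfl
  · rw [sigma_diff]
    have key : ∀ a b : Fin 6, a ≠ b → (a : ℕ) ≤ 2 → eps a - eps b ∈ R01 := by
      intro a b hab ha
      by_cases hb : (b : ℕ) ≤ 2
      · refine Or.inl (Or.inl (Or.inl ?_))
        rcases lt_or_gt_of_ne hab with h | h
        · exact ⟨a, b, h, hb, Or.inl rfl⟩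
        · exact ⟨b, a, h, ha, Or.inr rfl⟩
      · exact Or.inl (Or.inl (Or.inr ⟨a, b, ha, by omega, rfl⟩))
    by_cases hi : (i : ℕ) ≤ 2
    · exact Or.inl (key i j hij hi)
    · refine Or.inr (key _ _ (fun h => hij (Fin.rev_injective h)) ?_)
      rw [Fin.val_rev]
      omega
  · exact Or.inl (Or.inl (Or.inr ⟨i, j, k, hij, hjk, rfl⟩))
  · obtain ⟨a, b, c, hab, hbc, h⟩ := sigma_neg_triple i j k hij hjk
    exact Or.inr (Or.inl (Or.inr ⟨a, b, c, hab, hbc, h⟩))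
  · exact Or.inl (Or.inr rfl)
  · exact Or.inr (Or.inr sigma_neg_ones)

theorem diff_mem_roots {i j : Fin 6} (h : i ≠ j) : eps i - eps j ∈ Roots :=
  Or.inl (Or.inl ⟨i, j, h, rfl⟩)

theorem triple_mem_roots {a b c : Fin 6} (hab : a ≠ b) (hac : a ≠ c) (hbc : b ≠ c) :
    eps a + eps b + eps c ∈ Roots := by
  refine Or.inl (Or.inr ?_)
  rcases lt_or_gt_of_ne hab with h1 | h1 <;> rcases lt_or_gt_of_ne hac with h2 | h2 <;>
    rcases lt_or_gt_of_ne hbc with h3 | h3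
  · exact ⟨a, b, c, h1, h3, Or.inl (by abel)⟩
  · exact ⟨a, c, b, h2, h3, Or.inl (by abel)⟩
  · omega
  · exact ⟨c, a, b, h2, h1, Or.inl (by abel)⟩
  · exact ⟨b, a, c, h1, h2, Or.inl (by abel)⟩
  · omega
  · exact ⟨b, c, a, h3, h2, Or.inl (by abel)⟩
  · exact ⟨c, b, a, h3, h1, Or.inl (by abel)⟩

/-- A `σ`-positive system containing the base contains all of `R01`. -/
theorem R01_subset (R₀ : Set (Fin 6 → ℚ))
    (hR₀ : IsSigmaPositive R₀) (hbase : baseSet ⊆ R₀) : R01 ⊆ R₀ := by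
  obtain ⟨hsub, hcl, hun, hdis⟩ := hR₀
  have hno : ∀ v ∈ R₀, sigma v ∈ R₀ → False := by
    intro v hv hs
    have : sigma v ∈ R₀ ∩ sigma '' R₀ := ⟨hs, v, hv, rfl⟩
    rw [hdis] at this
    exact this
  have hor : ∀ v ∈ Roots, v ∈ R₀ ∨ sigma v ∈ R₀ := by
    intro v hv
    rw [← hun] at hv
    rcases hv with h | ⟨w, hw, rfl⟩
    · exact Or.inl h
    · exact Or.inr (by rwa [sigma_sigma])
  have hsmall : ∀ a b : Fin 6, a ≠ b → (a : ℕ) ≤ 2 → (b : ℕ) ≤ 2 → eps a - eps b ∈ R₀ := by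
    intro a b hab ha hb
    apply hbase
    refine Or.inl ?_
    rcases lt_or_gt_of_ne hab with h | h
    · exact ⟨a, b, h, hb, Or.inl rfl⟩
    · exact ⟨b, a, h, ha, Or.inr rfl⟩
  have h23 : eps 2 - eps 3 ∈ R₀ := hbase (Or.inr (Or.inl rfl))
  have h345 : eps 3 + eps 4 + eps 5 ∈ R₀ := hbase (Or.inr (Or.inr rfl))
  -- differences chain together
  have hchain : ∀ a b c : Fin 6, a ≠ c → eps a - eps b ∈ R₀ → eps b - eps c ∈ R₀ →
      eps a - eps c ∈ R₀ := by
    intro a b c hac h1 h2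
    have := hcl _ h1 _ h2
    rw [sub_add_sub_cancel] at this
    exact this (diff_mem_roots hac)
  have h2 : ∀ c : Fin 6, 3 ≤ (c : ℕ) → eps 2 - eps c ∈ R₀ := by
    intro c hc
    rcases hor _ (diff_mem_roots (i := 2) (j := c) (by rintro rfl; simp at hc)) with h | h
    · exact h
    · exfalso
      rw [sigma_diff] at h
      have e3 : Fin.rev (2 : Fin 6) = 3 := rfl
      have e2 : Fin.rev (3 : Fin 6) = 2 := rfl
      rw [e3] at h
      have hcv : ((Fin.rev c : Fin 6) : ℕ) ≤ 2 := by rw [Fin.val_rev]; omega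
      refine hno _ h23 ?_
      rw [sigma_diff, e3, e2]
      by_cases hc2 : Fin.rev c = 2
      · rwa [hc2] at h
      · exact hchain 3 _ 2 (by decide) h (hsmall _ 2 hc2 hcv (by simp))
  have hD : ∀ a c : Fin 6, (a : ℕ) ≤ 2 → 3 ≤ (c : ℕ) → eps a - eps c ∈ R₀ := by
    intro a c ha hc
    by_cases h : a = 2
    · rw [h]; exact h2 c hc
    · exact hchain a 2 c (by rintro rfl; omega) (hsmall a 2 h ha (by simp)) (h2 c hc)
  -- replacing a large index by a small one
  have hrep : ∀ x p b c : Fin 6, (x : ℕ) ≤ 2 → 3 ≤ (p : ℕ) → x ≠ b → x ≠ c → b ≠ c →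
      eps p + eps b + eps c ∈ R₀ → eps x + eps b + eps c ∈ R₀ := by
    intro x p b c hx hp hxb hxc hbc h
    have e : eps x - eps p + (eps p + eps b + eps c) = eps x + eps b + eps c := by abel
    have := hcl _ (hD x p hx hp) _ h
    rw [e] at this
    exact this (triple_mem_roots hxb hxc hbc)
  have hx3 : ∀ c : Fin 6, 3 ≤ (c : ℕ) → c = 3 ∨ c = 4 ∨ c = 5 := by decide
  have hT0 : ∀ a b c : Fin 6, 3 ≤ (a : ℕ) → 3 ≤ (b : ℕ) → 3 ≤ (c : ℕ) → a ≠ b → a ≠ c → b ≠ c →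
      eps a + eps b + eps c ∈ R₀ := by
    intro a b c ha hb hc hab hac hbc
    suffices h : eps a + eps b + eps c = eps 3 + eps 4 + eps 5 by rwa [h]
    rcases hx3 a ha with rfl | rfl | rfl <;> rcases hx3 b hb with rfl | rfl | rfl <;>
      rcases hx3 c hc with rfl | rfl | rfl <;> first | contradiction | abel
  have hT1 : ∀ x b c : Fin 6, (x : ℕ) ≤ 2 → 3 ≤ (b : ℕ) → 3 ≤ (c : ℕ) → b ≠ c →
      eps x + eps b + eps c ∈ R₀ := by
    intro x b c hx hb hc hbc
    have hp : ∀ b c : Fin 6, ∃ p : Fin 6, 3 ≤ (p : ℕ) ∧ p ≠ b ∧ p ≠ c := by decide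
    obtain ⟨p, hp, hpb, hpc⟩ := hp b c
    exact hrep x p b c hx hp (by omega) (by omega) hbc (hT0 p b c hp hb hc hpb hpc hbc)
  have hT2 : ∀ x y c : Fin 6, (x : ℕ) ≤ 2 → (y : ℕ) ≤ 2 → 3 ≤ (c : ℕ) → x ≠ y →
      eps x + eps y + eps c ∈ R₀ := by
    intro x y c hx hy hc hxy
    have hp : ∀ c : Fin 6, ∃ p : Fin 6, 3 ≤ (p : ℕ) ∧ p ≠ c := by decide
    obtain ⟨p, hp, hpc⟩ := hp c
    refine hrep x p y c hx hp hxy (by omega) (by omega) ?_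
    rw [add_comm (eps p)]
    exact hT1 y p c hy hp hc hpc
  have hT3 : ∀ x y z : Fin 6, (x : ℕ) ≤ 2 → (y : ℕ) ≤ 2 → (z : ℕ) ≤ 2 → x ≠ y → x ≠ z → y ≠ z →
      eps x + eps y + eps z ∈ R₀ := by
    intro x y z hx hy hz hxy hxz hyz
    refine hrep x 3 y z hx (by simp) hxy hxz hyz ?_
    rw [add_assoc, add_comm]
    exact hT2 y z 3 hy hz (by simp) hyz
  rintro v (((⟨i, j, hij, hj, rfl | rfl⟩ | ⟨i, j, hi, hj, rfl⟩) | ⟨i, j, k, hij, hjk, rfl⟩) | rfl)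
  · exact hsmall i j (by omega) (by omega) hj
  · exact hsmall j i (by omega) hj (by omega)
  · exact hD i j hi hj
  · by_cases hk : (k : ℕ) ≤ 2
    · exact hT3 i j k (by omega) (by omega) hk (by omega) (by omega) (by omega)
    by_cases hj : (j : ℕ) ≤ 2
    · exact hT2 i j k (by omega) hj (by omega) (by omega)
    by_cases hi : (i : ℕ) ≤ 2
    · exact hT1 i j k hi (by omega) (by omega) (by omega)
    · exact hT0 i j k (by omega) (by omega) (by omega) (by omega) (by omega) (by omega)
  · have h012 := hT3 0 1 2 (by simp) (by simp) (by simp) (by decide) (by decide) (by decide)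
    have e : eps 0 + eps 1 + eps 2 + (eps 3 + eps 4 + eps 5) = ones := by
      funext m
      fin_cases m <;> simp [eps_apply, ones]
    have := hcl _ h012 _ h345
    rw [e] at this
    exact this (Or.inr (Or.inl rfl))

/-- If `R₀` is a `σ`-positive system of the root system of `E₆`
containing `{±(ε_i − ε_j) : 1 ≤ i < j ≤ 3} ∪ {ε₃ − ε₄, ε₄ + ε₅ + ε₆}`, then
`R₀ = R₀⁽¹⁾`. -/
theorem sigma_positive_containing_base_eq (R₀ : Set (Fin 6 → ℚ))
    (hR₀ : IsSigmaPositive R₀) (hbase : baseSet ⊆ R₀) :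
    R₀ = R01 := by
  have hsub := R01_subset R₀ hR₀ hbase
  refine Set.Subset.antisymm (fun v hv => ?_) hsub
  rcases roots_cover v (hR₀.1 hv) with h | h
  · exact h
  · have : sigma v ∈ R₀ ∩ sigma '' R₀ := ⟨hsub h, v, hv, rfl⟩
    rw [hR₀.2.2.2] at this
    exact this.elim

end E6SigmaPositive
end

section
/- Let g^ℂ be a finite-dimensional complex semisimple Lie algebra with Cartan subalgebra h, root system R and a fixed Weyl basis {E_α}, and let k = h₀ + g(R₀) be a Lie subalgebra of g^ℂ, where h₀ ⊆ h, R₀ ⊆ R is a closed subset, and [g_α, g_{−α}] ⊆ h₀ for every α ∈ R₀^sym := R₀ ∩ (−R₀). Then the trivial extension to k of a 2-form ω̂₀ ∈ Λ²(h₀*) (extended by 0 on g(R₀)) is a closed 2-form on k if and only if ω̂₀([E_α, E_{−α}], H) = 0 for every α ∈ R₀^sym and every H ∈ h₀. -/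
/-- Let `gC` be a finite-dimensional complex semisimple Lie algebra
with Cartan subalgebra `H`, root system `R` and Weyl basis `{E α}`, and let
`k = h₀ + g(R₀)` be a Lie subalgebra, where `h₀ ⊆ H`, `R₀ ⊆ R` is closed and
`[g_α, g_{-α}] ⊆ h₀` for every `α ∈ R₀^sym`.  Then the trivial extension to `k` of a
2-form `ω̂₀` on `h₀` (extended by `0` on `g(R₀)`) is closed on `k` if and only if
`ω̂₀ ⁅E α, E (-α)⁆ H = 0` for every `α ∈ R₀^sym` and every `H ∈ h₀`. -/
theorem trivial_extension_closed_iff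
    {gC : Type*} [LieRing gC] [LieAlgebra ℂ gC] [FiniteDimensional ℂ gC]
    [LieAlgebra.IsSemisimple ℂ gC]
    (H : LieSubalgebra ℂ gC) [H.IsCartanSubalgebra]
    (R : Finset (Module.Dual ℂ gC))
    (E : Module.Dual ℂ gC → gC)
    (N : Module.Dual ℂ gC → Module.Dual ℂ gC → ℝ)
    -- properties of the root space decomposition and the Weyl basis
    (habel : ∀ x ∈ H, ∀ y ∈ H, ⁅x, y⁆ = (0 : gC))
    (hRne : ∀ α ∈ R, α ≠ (0 : Module.Dual ℂ gC))
    (hRneg : ∀ α ∈ R, -α ∈ R)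
    (hEne : ∀ α ∈ R, E α ≠ 0)
    (hroot : ∀ α ∈ R, ∀ x ∈ H, ⁅x, E α⁆ = α x • E α)
    (hαE : ∀ α ∈ R, ∀ β ∈ R, α (E β) = 0)
    (hbracket : ∀ α ∈ R, ∀ β ∈ R, α + β ∈ R → ⁅E α, E β⁆ = (N α β : ℂ) • E (α + β))
    (hbracket0 : ∀ α ∈ R, ∀ β ∈ R, α + β ≠ 0 → α + β ∉ R → ⁅E α, E β⁆ = 0)
    (hcoroot : ∀ α ∈ R, ⁅E α, E (-α)⁆ ∈ H)
    (hN0 : ∀ α β, α + β ∉ R → N α β = 0)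
    (hindep : LinearIndependent ℂ (fun α : {x : Module.Dual ℂ gC // x ∈ R} => E ↑α))
    (hdisj : Disjoint H.toSubmodule (Submodule.span ℂ (E '' ↑R)))
    (hdecomp : H.toSubmodule ⊔ Submodule.span ℂ (E '' ↑R) = ⊤)
    -- the closed subset `R₀ ⊆ R` and the subspace `h₀ ⊆ H`
    (R₀ : Finset (Module.Dual ℂ gC))
    (hR₀R : R₀ ⊆ R)
    (hR₀Closed : ∀ α ∈ R₀, ∀ β ∈ R₀, α + β ∈ R → α + β ∈ R₀)
    (h₀ : Submodule ℂ gC) (hh₀ : h₀ ≤ H.toSubmodule)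
    (hsym : ∀ α ∈ R₀, -α ∈ R₀ → ⁅E α, E (-α)⁆ ∈ h₀)
    -- the regular subalgebra `k = h₀ + g(R₀)`
    (k : Submodule ℂ gC)
    (hk : k = h₀ ⊔ Submodule.span ℂ (E '' ↑R₀))
    -- a 2-form on `h₀`, trivially extended to `k` by `0` on `g(R₀)`
    (ω₀ : gC →ₗ[ℂ] gC →ₗ[ℂ] ℂ)
    (halt : ∀ x : gC, ω₀ x x = 0)
    (htriv : ∀ x y : gC, x ∈ Submodule.span ℂ (E '' ↑R₀) ∨
        y ∈ Submodule.span ℂ (E '' ↑R₀) → ω₀ x y = 0) :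
    (∀ x ∈ k, ∀ y ∈ k, ∀ z ∈ k, ω₀ x ⁅y, z⁆ + ω₀ z ⁅x, y⁆ + ω₀ y ⁅z, x⁆ = 0)
      ↔ (∀ α ∈ R₀, -α ∈ R₀ → ∀ x ∈ h₀, ω₀ ⁅E α, E (-α)⁆ x = 0) := by
  have hanti : ∀ x y : gC, ω₀ x y = - ω₀ y x := by
    intro x y
    have h := halt (x + y)
    simp only [map_add, LinearMap.add_apply, halt] at h
    linear_combination h
  have hES : ∀ α ∈ R₀, E α ∈ Submodule.span ℂ (E '' ↑R₀) := fun α hα =>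
    Submodule.subset_span ⟨α, hα, rfl⟩
  constructor
  · intro h α hα hnα x hx
    have h1 := h (E α) (hk ▸ Submodule.mem_sup_right (hES α hα))
      (E (-α)) (hk ▸ Submodule.mem_sup_right (hES _ hnα)) x (hk ▸ Submodule.mem_sup_left hx)
    rw [htriv (E α) _ (Or.inl (hES α hα)), htriv (E (-α)) _ (Or.inl (hES _ hnα))] at h1
    rw [hanti]
    linear_combination -h1
  · intro h
    -- brackets of `h₀` with the root part stay in the root part
    have hS : ∀ a ∈ h₀, ∀ u ∈ Submodule.span ℂ (E '' ↑R₀),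
        ⁅a, u⁆ ∈ Submodule.span ℂ (E '' ↑R₀) := by
      intro a ha u hu
      induction hu using Submodule.span_induction with
      | mem u hu =>
        obtain ⟨α, hα, rfl⟩ := hu
        rw [hroot α (hR₀R hα) a (hh₀ ha)]
        exact Submodule.smul_mem _ _ (hES α hα)
      | zero => simp
      | add u v _ _ hu hv => rw [lie_add]; exact Submodule.add_mem _ hu hv
      | smul c u _ hu => rw [lie_smul]; exact Submodule.smul_mem _ _ hu
    have key : ∀ a ∈ h₀, ∀ u ∈ Submodule.span ℂ (E '' ↑R₀),
        ∀ v ∈ Submodule.span ℂ (E '' ↑R₀), ω₀ a ⁅u, v⁆ = 0 := by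
      intro a ha u hu v hv
      induction hu using Submodule.span_induction with
      | mem u hu =>
        obtain ⟨α, hα, rfl⟩ := hu
        induction hv using Submodule.span_induction with
        | mem v hv =>
          obtain ⟨β, hβ, rfl⟩ := hv
          have hα' : α ∈ R₀ := hα
          have hβ' : β ∈ R₀ := hβ
          by_cases h0 : α + β = 0
          · obtain rfl : β = -α := (neg_eq_of_add_eq_zero_right h0).symm
            rw [hanti, h α hα' hβ' a ha, neg_zero]
          · by_cases hR : α + β ∈ R
            · rw [hbracket α (hR₀R hα') β (hR₀R hβ') hR, map_smul,
                htriv a _ (Or.inr (hES _ (hR₀Closed α hα' β hβ' hR))), smul_zero]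
            · rw [hbracket0 α (hR₀R hα') β (hR₀R hβ') h0 hR, map_zero]
        | zero => simp
        | add u v _ _ hu hv => rw [lie_add, map_add, hu, hv, add_zero]
        | smul c u _ hu => rw [lie_smul, map_smul, hu, smul_zero]
      | zero => simp
      | add u v _ _ hu hv => rw [add_lie, map_add, hu, hv, add_zero]
      | smul c u _ hu => rw [smul_lie, map_smul, hu, smul_zero]
    have main : ∀ x ∈ k, ∀ y ∈ k, ∀ z ∈ k, ω₀ x ⁅y, z⁆ = 0 := by
      intro x hx y hy z hz
      rw [hk] at hx hy hz
      obtain ⟨a, ha, u, hu, rfl⟩ := Submodule.mem_sup.mp hx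
      obtain ⟨b, hb, v, hv, rfl⟩ := Submodule.mem_sup.mp hy
      obtain ⟨c, hc, w, hw, rfl⟩ := Submodule.mem_sup.mp hz
      have e1 : ω₀ a ⁅v, c⁆ = 0 := by
        rw [← lie_skew, map_neg, htriv a _ (Or.inr (hS c hc v hv)), neg_zero]
      rw [map_add, LinearMap.add_apply, htriv u _ (Or.inl hu), add_zero, add_lie, lie_add,
        lie_add, habel b (hh₀ hb) c (hh₀ hc), map_add, map_add, map_add, e1,
        htriv a _ (Or.inr (hS b hb w hw)), key a ha v hv w hw]
      simp
    intro x hx y hy z hz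
    rw [main x hx y hy z hz, main z hz x hx y hy, main y hy z hz x hx]
    simp
end

section
/- Let g^ℂ be a finite-dimensional complex semisimple Lie algebra, σ an antilinear involutive automorphism with fixed-point set g, h a σ-invariant Cartan subalgebra with root system R, and fix a Weyl basis {E_α}. Let R₀ ⊆ R be a σ-positive system and k = h₀ + g(R₀) a Lie subalgebra with h₀ ⊆ h and h₀ + σ(h₀) = h. Set 𝒮 := Span_ℂ{[E_α, E_{−α}] : α ∈ R₀^sym} and assume 𝒮 ⊆ h₀ and 𝒮 ∩ σ(𝒮) = {0}. Let ω̂₀ ∈ Λ²(h₀*) be a 2-form with ω̂₀(s, ·) = 0 for every s ∈ 𝒮 and such that Im(ω̂₀) is nondegenerate on l := (h₀ ∩ σ(h₀)) ∩ g. Then, denoting again by ω̂₀ its trivial extension to k (by 0 on g(R₀)), the pair (k, ω̂₀) is a g-admissible pair. -/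
/-- Let `gC` be a finite-dimensional complex semisimple Lie
algebra, `σ` a conjugation with real form `g`, `H` a `σ`-invariant Cartan
subalgebra with root system `R` and a Weyl basis `{E α}`.  Let `R₀ ⊆ R` be a
`σ`-positive system and `k = h₀ + g(R₀)` a Lie subalgebra with `h₀ ⊆ H` and
`h₀ + σ(h₀) = H`.  Let `𝒮 := span{⁅E α, E (-α)⁆ : α ∈ R₀^sym}` and assume
`𝒮 ⊆ h₀` and `𝒮 ∩ σ(𝒮) = {0}`.  If `ω̂₀` is a 2-form on `h₀` with
`ω̂₀(s, ·) = 0` for `s ∈ 𝒮` and `Im ω̂₀` nondegenerate on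
`l := (h₀ ∩ σ(h₀)) ∩ g`, then (denoting again by `ω̂₀` its trivial extension to
`k`) the pair `(k, ω̂₀)` is a `g`-admissible pair. -/
theorem trivial_extension_admissible_pair
    {gC : Type*} [LieRing gC] [LieAlgebra ℂ gC] [FiniteDimensional ℂ gC]
    [LieAlgebra.IsSemisimple ℂ gC]
    (σ : LieAntiInvolution gC)
    (H : LieSubalgebra ℂ gC) [H.IsCartanSubalgebra]
    (hσH : ∀ x ∈ H, σ.toFun x ∈ H)
    (R : Finset (Module.Dual ℂ gC))
    (E : Module.Dual ℂ gC → gC)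
    (N : Module.Dual ℂ gC → Module.Dual ℂ gC → ℝ)
    -- properties of the root space decomposition and the Weyl basis
    (habel : ∀ x ∈ H, ∀ y ∈ H, ⁅x, y⁆ = (0 : gC))
    (hRne : ∀ α ∈ R, α ≠ (0 : Module.Dual ℂ gC))
    (hRneg : ∀ α ∈ R, -α ∈ R)
    (hEne : ∀ α ∈ R, E α ≠ 0)
    (hroot : ∀ α ∈ R, ∀ x ∈ H, ⁅x, E α⁆ = α x • E α)
    (hαE : ∀ α ∈ R, ∀ β ∈ R, α (E β) = 0)
    (hbracket : ∀ α ∈ R, ∀ β ∈ R, α + β ∈ R → ⁅E α, E β⁆ = (N α β : ℂ) • E (α + β))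
    (hbracket0 : ∀ α ∈ R, ∀ β ∈ R, α + β ≠ 0 → α + β ∉ R → ⁅E α, E β⁆ = 0)
    (hcoroot : ∀ α ∈ R, ⁅E α, E (-α)⁆ ∈ H)
    (hindep : LinearIndependent ℂ (fun α : {x : Module.Dual ℂ gC // x ∈ R} => E ↑α))
    (hdisj : Disjoint H.toSubmodule (Submodule.span ℂ (E '' ↑R)))
    (hdecomp : H.toSubmodule ⊔ Submodule.span ℂ (E '' ↑R) = ⊤)
    -- `σ` acts on the roots and the root vectors
    (hσR : ∀ α ∈ R, σ.dualConj α ∈ R)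
    (hσE : ∀ α ∈ R, ∃ c : ℂ, c ≠ 0 ∧ σ.toFun (E α) = c • E (σ.dualConj α))
    -- the `σ`-positive system `R₀`
    (R₀ : Finset (Module.Dual ℂ gC))
    (hR₀R : R₀ ⊆ R)
    (hR₀Closed : ∀ α ∈ R₀, ∀ β ∈ R₀, α + β ∈ R → α + β ∈ R₀)
    (hR₀Union : ((R₀ : Set (Module.Dual ℂ gC)) ∪ σ.dualConj '' ↑R₀)
        = (R : Set (Module.Dual ℂ gC)))
    (hR₀Disj : ((R₀ : Set (Module.Dual ℂ gC)) ∩ σ.dualConj '' ↑R₀) = ∅)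
    -- the Cartan part `h₀` of `k`, with `h₀ + σ(h₀) = H`
    (h₀ : Submodule ℂ gC) (hh₀ : h₀ ≤ H.toSubmodule)
    (hHspan : ∀ x ∈ H, ∃ a ∈ h₀, ∃ b ∈ h₀, x = a + σ.toFun b)
    -- the subspace `𝒮 = span{⁅E α, E (-α)⁆ : α ∈ R₀^sym}`
    (S : Submodule ℂ gC)
    (hS : S = Submodule.span ℂ {x : gC | ∃ α ∈ R₀, -α ∈ R₀ ∧ x = ⁅E α, E (-α)⁆})
    (hSh₀ : S ≤ h₀)
    (hSσ : ∀ x ∈ ((S : Set gC) ∩ σ.toFun '' (S : Set gC)), x = 0)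
    -- the regular subalgebra `k = h₀ + g(R₀)`
    (k : Submodule ℂ gC)
    (hk : k = h₀ ⊔ Submodule.span ℂ (E '' ↑R₀))
    -- the 2-form `ω̂₀` on `h₀`, trivially extended to `k` by `0` on `g(R₀)`
    (ω₀ : gC →ₗ[ℂ] gC →ₗ[ℂ] ℂ)
    (halt : ∀ x : gC, ω₀ x x = 0)
    (htriv : ∀ x y : gC, x ∈ Submodule.span ℂ (E '' ↑R₀) ∨
        y ∈ Submodule.span ℂ (E '' ↑R₀) → ω₀ x y = 0)
    (hSker : ∀ s ∈ S, ∀ y : gC, ω₀ s y = 0)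
    (hnondeg : ∀ x ∈ h₀, x ∈ σ.toFun '' (h₀ : Set gC) → σ.toFun x = x →
        (∀ y ∈ h₀, y ∈ σ.toFun '' (h₀ : Set gC) → σ.toFun y = y →
          (ω₀ x y).im = 0) → x = 0) :
    -- conclusion: `(k, ω̂₀)` is a `g`-admissible pair
    (∀ x ∈ k, ∀ y ∈ k, ∀ z ∈ k, ω₀ x ⁅y, z⁆ + ω₀ z ⁅x, y⁆ + ω₀ y ⁅z, x⁆ = 0)
    ∧ (∀ x : gC, ∃ a ∈ k, ∃ b ∈ k, x = a + σ.toFun b)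
    ∧ (∀ x ∈ k, σ.toFun x = x →
        (∀ y ∈ k, σ.toFun y = y → (ω₀ x y).im = 0) → x = 0) := by
  subst hk
  classical
  have hasym : ∀ x y : gC, ω₀ x y = - ω₀ y x := by
    intro x y
    have h := halt (x + y)
    simp only [map_add, LinearMap.add_apply, halt, zero_add, add_zero] at h
    exact eq_neg_of_add_eq_zero_right h
  -- the conjugation as a semilinear map
  let τ : gC →ₛₗ[starRingEnd ℂ] gC :=
    { toFun := σ.toFun, map_add' := σ.map_add', map_smul' := σ.map_smul' }
  have hτ : ∀ x, τ x = σ.toFun x := fun _ => rfl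
  set V := Submodule.span ℂ (E '' (R₀ : Set (Module.Dual ℂ gC))) with hV
  have hEV : ∀ α ∈ R₀, E α ∈ V := fun α hα => Submodule.subset_span ⟨α, hα, rfl⟩
  have hHV : ∀ x ∈ H, ∀ v ∈ V, ⁅x, v⁆ ∈ V := by
    intro x hx v hv
    induction hv using Submodule.span_induction with
    | mem v hv =>
      obtain ⟨α, hα, rfl⟩ := hv
      rw [hroot α (hR₀R hα) x hx]
      exact V.smul_mem _ (hEV α hα)
    | zero => simp
    | add a b _ _ ha hb => rw [lie_add]; exact V.add_mem ha hb
    | smul c a _ ha => rw [lie_smul]; exact V.smul_mem _ ha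
  have hVV : ∀ u ∈ V, ∀ v ∈ V, ⁅u, v⁆ ∈ S ⊔ V := by
    intro u hu v hv
    induction hu using Submodule.span_induction with
    | zero => simp
    | add a b _ _ ha hb => rw [add_lie]; exact Submodule.add_mem _ ha hb
    | smul c a _ ha => rw [smul_lie]; exact Submodule.smul_mem _ _ ha
    | mem u hu =>
      obtain ⟨α, hα, rfl⟩ := hu
      induction hv using Submodule.span_induction with
      | zero => simp
      | add a b _ _ ha hb => rw [lie_add]; exact Submodule.add_mem _ ha hb
      | smul c a _ ha => rw [lie_smul]; exact Submodule.smul_mem _ _ ha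
      | mem v hv =>
        obtain ⟨β, hβ, rfl⟩ := hv
        have hα' : α ∈ R₀ := hα
        have hβ' : β ∈ R₀ := hβ
        by_cases h0 : α + β = 0
        · have hb : β = -α := eq_neg_of_add_eq_zero_right h0
          subst hb
          apply Submodule.mem_sup_left
          rw [hS]
          exact Submodule.subset_span ⟨α, hα', hβ', rfl⟩
        · by_cases h1 : α + β ∈ R
          · rw [hbracket α (hR₀R hα') β (hR₀R hβ') h1]
            exact Submodule.mem_sup_right
              (V.smul_mem _ (hEV _ (hR₀Closed α hα' β hβ' h1)))
          · rw [hbracket0 α (hR₀R hα') β (hR₀R hβ') h0 h1]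
            exact Submodule.zero_mem _
  have hkk : ∀ y ∈ h₀ ⊔ V, ∀ z ∈ h₀ ⊔ V, ⁅y, z⁆ ∈ S ⊔ V := by
    intro y hy z hz
    obtain ⟨a, ha, u, hu, rfl⟩ := Submodule.mem_sup.1 hy
    obtain ⟨b, hb, v, hv, rfl⟩ := Submodule.mem_sup.1 hz
    have e : ⁅a + u, b + v⁆ = ⁅a, v⁆ - ⁅b, u⁆ + ⁅u, v⁆ := by
      rw [add_lie, lie_add, lie_add, habel a (hh₀ ha) b (hh₀ hb), ← lie_skew b u]
      abel
    rw [e]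
    exact Submodule.add_mem _ (Submodule.mem_sup_right
      (V.sub_mem (hHV a (hh₀ ha) v hv) (hHV b (hh₀ hb) u hu))) (hVV u hu v hv)
  have hω : ∀ x, ∀ w ∈ S ⊔ V, ω₀ x w = 0 := by
    intro x w hw
    obtain ⟨s, hs, v, hv, rfl⟩ := Submodule.mem_sup.1 hw
    rw [map_add, htriv x v (Or.inr hv), hasym, hSker s hs]
    simp
  refine ⟨?_, ?_, ?_⟩
  · intro x hx y hy z hz
    rw [hω x _ (hkk y hy z hz), hω z _ (hkk x hx y hy), hω y _ (hkk z hz x hx)]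
    simp
  · have htop : (h₀ ⊔ V) ⊔ (h₀ ⊔ V).map τ = ⊤ := by
      rw [eq_top_iff, ← hdecomp]
      refine sup_le ?_ (Submodule.span_le.2 ?_)
      · intro x hx
        obtain ⟨a, ha, b, hb, rfl⟩ := hHspan x hx
        exact Submodule.add_mem _ (Submodule.mem_sup_left (Submodule.mem_sup_left ha))
          (Submodule.mem_sup_right ⟨b, Submodule.mem_sup_left hb, rfl⟩)
      · rintro _ ⟨α, hα, rfl⟩
        rw [← hR₀Union] at hα
        rcases hα with hα | ⟨β, hβ, rfl⟩
        · exact Submodule.mem_sup_left (Submodule.mem_sup_right (hEV α hα))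
        · obtain ⟨c, hc, h⟩ := hσE β (hR₀R hβ)
          have e : E (σ.dualConj β) = c⁻¹ • τ (E β) := by
            rw [hτ, h, smul_smul, inv_mul_cancel₀ hc, one_smul]
          rw [e]
          exact Submodule.mem_sup_right (Submodule.smul_mem _ _
            ⟨E β, Submodule.mem_sup_right (hEV β hβ), rfl⟩)
    intro x
    have hx : x ∈ (h₀ ⊔ V) ⊔ (h₀ ⊔ V).map τ := htop ▸ Submodule.mem_top
    obtain ⟨a, ha, _, ⟨b, hb, rfl⟩, rfl⟩ := Submodule.mem_sup.1 hx
    exact ⟨a, ha, b, hb, rfl⟩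
  · intro x hx hσx hxy
    obtain ⟨a, ha, u, hu, rfl⟩ := Submodule.mem_sup.1 hx
    set W := Submodule.span ℂ (E '' (σ.dualConj '' (R₀ : Set (Module.Dual ℂ gC)))) with hW
    have hτu : σ.toFun u ∈ W := by
      have : V ≤ W.comap τ := by
        refine Submodule.span_le.2 ?_
        rintro _ ⟨β, hβ, rfl⟩
        obtain ⟨c, hc, h⟩ := hσE β (hR₀R hβ)
        change σ.toFun (E β) ∈ W
        rw [h]
        exact W.smul_mem _ (Submodule.subset_span ⟨_, ⟨β, hβ, rfl⟩, rfl⟩)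
      exact this hu
    have hVR : V ≤ Submodule.span ℂ (E '' (R : Set (Module.Dual ℂ gC))) :=
      Submodule.span_mono (Set.image_mono (hR₀Union ▸ Set.subset_union_left))
    have hWR : W ≤ Submodule.span ℂ (E '' (R : Set (Module.Dual ℂ gC))) :=
      Submodule.span_mono (Set.image_mono (hR₀Union ▸ Set.subset_union_right))
    have hVW : Disjoint V W := by
      have hd : Disjoint {α : {x // x ∈ R} | (α : Module.Dual ℂ gC) ∈ R₀}
          {α : {x // x ∈ R} | (α : Module.Dual ℂ gC) ∈ σ.dualConj '' (R₀ : Set _)} := by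
        rw [Set.disjoint_left]
        intro α h1 h2
        have : (α : Module.Dual ℂ gC) ∈ (∅ : Set (Module.Dual ℂ gC)) := by
          rw [← hR₀Disj]; exact ⟨h1, h2⟩
        exact this
      refine (hindep.disjoint_span_image hd).mono (Submodule.span_mono ?_)
        (Submodule.span_mono ?_)
      · rintro _ ⟨β, hβ, rfl⟩
        exact ⟨⟨β, hR₀R hβ⟩, hβ, rfl⟩
      · rintro _ ⟨_, ⟨β, hβ, rfl⟩, rfl⟩
        exact ⟨⟨_, hσR β (hR₀R hβ)⟩, ⟨β, hβ, rfl⟩, rfl⟩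
    rw [σ.map_add'] at hσx
    have e : σ.toFun a - a = u - σ.toFun u := by
      rw [sub_eq_sub_iff_add_eq_add, hσx, add_comm]
    have h1 : σ.toFun a - a = 0 :=
      Submodule.disjoint_def.1 hdisj _
        (H.toSubmodule.sub_mem (hσH a (hh₀ ha)) (hh₀ ha))
        (e ▸ Submodule.sub_mem _ (hVR hu) (hWR hτu))
    have h2 : u = σ.toFun u := by
      rw [h1] at e
      exact sub_eq_zero.1 e.symm
    have h3 : u = 0 := Submodule.disjoint_def.1 hVW u hu (h2 ▸ hτu)
    have h4 : σ.toFun a = a := sub_eq_zero.1 h1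
    subst h3
    rw [add_zero] at hxy ⊢
    exact hnondeg a ha ⟨a, ha, h4⟩ h4
      (fun y hy _ hy' => hxy y (Submodule.mem_sup_left hy) hy')
end

section
/- Let g^ℂ be a finite-dimensional complex semisimple Lie algebra with Cartan subalgebra h, root system R and fixed Weyl basis {E_α}, and let k = h₀ + g(R₀) be a Lie subalgebra with h₀ ⊆ h, R₀ ⊆ R closed and [g_α,g_{−α}] ⊆ h₀ for α ∈ R₀^sym. Let γ ∈ R₀ be such that γ is not the sum of two elements of R₀. Then the restriction to k of the dual covector ω_γ satisfies d_k(ω_γ|_k) = −(γ ∧ ω_γ)|_k, i.e. ω_γ([X,Y]) = (γ∧ω_γ)(X,Y) for all X, Y ∈ k. If moreover γ([E_α, E_{−α}]) = 0 for every α ∈ R₀^sym, then γ|_k (extended by 0 on g(R₀)) satisfies d_k(γ|_k) = 0, and consequently λ·(γ ∧ ω_γ)|_k is a closed 2-form on k for every λ ∈ ℂ. -/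
open scoped Classical

/-- A bilinear identity on the generators of `h₀ ⊔ span S` extends to the whole space. -/
theorem bilin_vanish_aux {V : Type*} [AddCommGroup V] [Module ℂ V]
    (B : V →ₗ[ℂ] V →ₗ[ℂ] ℂ) (h₀ : Submodule ℂ V) (S : Set V)
    (h1 : ∀ x ∈ h₀, ∀ y ∈ h₀, B x y = 0) (h2 : ∀ x ∈ h₀, ∀ y ∈ S, B x y = 0)
    (h3 : ∀ x ∈ S, ∀ y ∈ h₀, B x y = 0) (h4 : ∀ x ∈ S, ∀ y ∈ S, B x y = 0) :
    ∀ x ∈ h₀ ⊔ Submodule.span ℂ S, ∀ y ∈ h₀ ⊔ Submodule.span ℂ S, B x y = 0 := by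
  have key : ∀ x, (∀ y ∈ h₀, B x y = 0) → (∀ y ∈ S, B x y = 0) →
      ∀ y ∈ h₀ ⊔ Submodule.span ℂ S, B x y = 0 := by
    intro x ha hb
    have : h₀ ⊔ Submodule.span ℂ S ≤ LinearMap.ker (B x) :=
      sup_le (fun y hy => ha y hy) (Submodule.span_le.2 fun y hy => hb y hy)
    exact fun y hy => this hy
  intro x hx y hy
  have : h₀ ⊔ Submodule.span ℂ S ≤ LinearMap.ker (B.flip y) :=
    sup_le (fun x hx => key x (h1 x hx) (h2 x hx) y hy)
      (Submodule.span_le.2 fun x hx => key x (h3 x hx) (h4 x hx) y hy)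
  exact this hx

/-- Let `gC` be a finite-dimensional complex semisimple Lie algebra
with Cartan subalgebra `H`, root system `R` and a Weyl basis `{E α}` with dual
covectors `ωc α`, and let `k = h₀ + g(R₀)` be a Lie subalgebra with `h₀ ⊆ H`,
`R₀ ⊆ R` closed and `⁅g_α, g_{-α}⁆ ⊆ h₀` for `α ∈ R₀^sym`.  Let `γ ∈ R₀` be a root
that is not the sum of two elements of `R₀`.  Then `d_k (ω_γ|_k) = -(γ ∧ ω_γ)|_k`,
i.e. `ω_γ ⁅X, Y⁆ = (γ ∧ ω_γ)(X, Y)` for all `X, Y ∈ k`.  If moreover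
`γ ⁅E α, E (-α)⁆ = 0` for every `α ∈ R₀^sym`, then `d_k (γ|_k) = 0`, and
consequently `λ • (γ ∧ ω_γ)|_k` is a closed 2-form on `k` for every `λ ∈ ℂ`. -/
theorem wedge_root_covector_closed
    {gC : Type*} [LieRing gC] [LieAlgebra ℂ gC] [FiniteDimensional ℂ gC]
    [LieAlgebra.IsSemisimple ℂ gC]
    (H : LieSubalgebra ℂ gC) [H.IsCartanSubalgebra]
    (R : Finset (Module.Dual ℂ gC))
    (E : Module.Dual ℂ gC → gC)
    (N : Module.Dual ℂ gC → Module.Dual ℂ gC → ℝ)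
    (ωc : Module.Dual ℂ gC → Module.Dual ℂ gC)
    -- properties of the root space decomposition and the Weyl basis
    (habel : ∀ x ∈ H, ∀ y ∈ H, ⁅x, y⁆ = (0 : gC))
    (hRne : ∀ α ∈ R, α ≠ (0 : Module.Dual ℂ gC))
    (hRneg : ∀ α ∈ R, -α ∈ R)
    (hEne : ∀ α ∈ R, E α ≠ 0)
    (hroot : ∀ α ∈ R, ∀ x ∈ H, ⁅x, E α⁆ = α x • E α)
    (hαE : ∀ α ∈ R, ∀ β ∈ R, α (E β) = 0)
    (hbracket : ∀ α ∈ R, ∀ β ∈ R, α + β ∈ R → ⁅E α, E β⁆ = (N α β : ℂ) • E (α + β))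
    (hbracket0 : ∀ α ∈ R, ∀ β ∈ R, α + β ≠ 0 → α + β ∉ R → ⁅E α, E β⁆ = 0)
    (hcoroot : ∀ α ∈ R, ⁅E α, E (-α)⁆ ∈ H)
    (hN0 : ∀ α β, α + β ∉ R → N α β = 0)
    (hindep : LinearIndependent ℂ (fun α : {x : Module.Dual ℂ gC // x ∈ R} => E ↑α))
    (hdisj : Disjoint H.toSubmodule (Submodule.span ℂ (E '' ↑R)))
    (hdecomp : H.toSubmodule ⊔ Submodule.span ℂ (E '' ↑R) = ⊤)
    (hωcH : ∀ α ∈ R, ∀ x ∈ H, ωc α x = 0)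
    (hωcE : ∀ α ∈ R, ∀ β ∈ R, ωc α (E β) = if α = β then 1 else 0)
    -- the closed subset `R₀ ⊆ R` and the subspace `h₀ ⊆ H`
    (R₀ : Finset (Module.Dual ℂ gC))
    (hR₀R : R₀ ⊆ R)
    (hR₀Closed : ∀ α ∈ R₀, ∀ β ∈ R₀, α + β ∈ R → α + β ∈ R₀)
    (h₀ : Submodule ℂ gC) (hh₀ : h₀ ≤ H.toSubmodule)
    (hsym : ∀ α ∈ R₀, -α ∈ R₀ → ⁅E α, E (-α)⁆ ∈ h₀)
    -- the regular subalgebra `k = h₀ + g(R₀)`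
    (k : Submodule ℂ gC)
    (hk : k = h₀ ⊔ Submodule.span ℂ (E '' ↑R₀))
    -- the distinguished root `γ`, not a sum of two elements of `R₀`
    (γ : Module.Dual ℂ gC)
    (hγ : γ ∈ R₀)
    (hγsum : ∀ α ∈ R₀, ∀ β ∈ R₀, γ ≠ α + β) :
    -- `d_k (ω_γ|_k) = -(γ ∧ ω_γ)|_k`
    (∀ X ∈ k, ∀ Y ∈ k, ωc γ ⁅X, Y⁆ = γ X * ωc γ Y - γ Y * ωc γ X)
    -- if `γ` kills the coroots of `R₀^sym` then `d_k (γ|_k) = 0` ...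
    ∧ ((∀ α ∈ R₀, -α ∈ R₀ → γ ⁅E α, E (-α)⁆ = 0) →
        (∀ X ∈ k, ∀ Y ∈ k, γ ⁅X, Y⁆ = 0)
        -- ... and consequently `λ • (γ ∧ ω_γ)|_k` is closed on `k` for every `λ`
        ∧ ∀ (lam : ℂ), ∀ X ∈ k, ∀ Y ∈ k, ∀ Z ∈ k,
            lam * (γ X * ωc γ ⁅Y, Z⁆ - γ ⁅Y, Z⁆ * ωc γ X)
            + lam * (γ Z * ωc γ ⁅X, Y⁆ - γ ⁅X, Y⁆ * ωc γ Z)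
            + lam * (γ Y * ωc γ ⁅Z, X⁆ - γ ⁅Z, X⁆ * ωc γ Y) = 0) := by
  have hγR := hR₀R hγ
  have hroot' : ∀ α ∈ R, ∀ x ∈ H, ⁅E α, x⁆ = -(α x • E α) := by
    intro α hα x hx
    rw [← lie_skew, hroot α hα x hx]
  have first : ∀ X ∈ k, ∀ Y ∈ k, ωc γ ⁅X, Y⁆ = γ X * ωc γ Y - γ Y * ωc γ X := by
    let B : gC →ₗ[ℂ] gC →ₗ[ℂ] ℂ := LinearMap.mk₂ ℂ
      (fun X Y => ωc γ ⁅X, Y⁆ - (γ X * ωc γ Y - γ Y * ωc γ X))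
      (by intros; simp only [add_lie, map_add]; ring)
      (by intros; simp only [smul_lie, map_smul, smul_eq_mul]; ring)
      (by intros; simp only [lie_add, map_add]; ring)
      (by intros; simp only [lie_smul, map_smul, smul_eq_mul]; ring)
    have hB : ∀ X Y, B X Y = ωc γ ⁅X, Y⁆ - (γ X * ωc γ Y - γ Y * ωc γ X) := fun _ _ => rfl
    have := bilin_vanish_aux B h₀ (E '' ↑R₀) ?_ ?_ ?_ ?_
    · intro X hX Y hY
      rw [hk] at hX hY
      exact sub_eq_zero.1 ((hB X Y).symm.trans (this X hX Y hY))
    · intro x hx y hy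
      rw [hB, habel x (hh₀ hx) y (hh₀ hy), hωcH γ hγR x (hh₀ hx), hωcH γ hγR y (hh₀ hy)]
      simp
    · rintro x hx _ ⟨α, hα, rfl⟩
      have hαR := hR₀R hα
      rw [hB, hroot α hαR x (hh₀ hx), hωcH γ hγR x (hh₀ hx), map_smul, hωcE γ hγR α hαR]
      split_ifs with h
      · subst h; simp
      · simp
    · rintro _ ⟨α, hα, rfl⟩ x hx
      have hαR := hR₀R hα
      rw [hB, hroot' α hαR x (hh₀ hx), hωcH γ hγR x (hh₀ hx), map_neg, map_smul,
        hωcE γ hγR α hαR]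
      split_ifs with h
      · subst h; simp
      · simp
    · rintro _ ⟨α, hα, rfl⟩ _ ⟨β, hβ, rfl⟩
      have hαR := hR₀R hα
      have hβR := hR₀R hβ
      rw [hB, hαE γ hγR α hαR, hαE γ hγR β hβR]
      by_cases h0 : α + β = 0
      · obtain rfl := (neg_eq_of_add_eq_zero_right h0).symm
        rw [hωcH γ hγR _ (hcoroot α hαR)]; simp
      · by_cases h1 : α + β ∈ R
        · rw [hbracket α hαR β hβR h1, map_smul, hωcE γ hγR _ h1, if_neg (hγsum α hα β hβ)]
          simp
        · rw [hbracket0 α hαR β hβR h0 h1]; simp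
  refine ⟨first, fun hc => ?_⟩
  have second : ∀ X ∈ k, ∀ Y ∈ k, γ ⁅X, Y⁆ = 0 := by
    let B : gC →ₗ[ℂ] gC →ₗ[ℂ] ℂ := LinearMap.mk₂ ℂ
      (fun X Y => γ ⁅X, Y⁆)
      (by intros; simp only [add_lie, map_add])
      (by intros; simp only [smul_lie, map_smul])
      (by intros; simp only [lie_add, map_add])
      (by intros; simp only [lie_smul, map_smul])
    have hB : ∀ X Y, B X Y = γ ⁅X, Y⁆ := fun _ _ => rfl
    rw [hk]
    refine bilin_vanish_aux B h₀ (E '' ↑R₀) ?_ ?_ ?_ ?_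
    · intro x hx y hy
      rw [hB, habel x (hh₀ hx) y (hh₀ hy), map_zero]
    · rintro x hx _ ⟨α, hα, rfl⟩
      have hαR := hR₀R hα
      rw [hB, hroot α hαR x (hh₀ hx), map_smul, hαE γ hγR α hαR, smul_zero]
    · rintro _ ⟨α, hα, rfl⟩ x hx
      have hαR := hR₀R hα
      rw [hB, hroot' α hαR x (hh₀ hx), map_neg, map_smul, hαE γ hγR α hαR, smul_zero, neg_zero]
    · rintro _ ⟨α, hα, rfl⟩ _ ⟨β, hβ, rfl⟩
      have hαR := hR₀R hα
      have hβR := hR₀R hβ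
      rw [hB]
      by_cases h0 : α + β = 0
      · obtain rfl := (neg_eq_of_add_eq_zero_right h0).symm
        exact hc α hα hβ
      · by_cases h1 : α + β ∈ R
        · rw [hbracket α hαR β hβR h1, map_smul, hαE γ hγR _ h1, smul_zero]
        · rw [hbracket0 α hαR β hβR h0 h1, map_zero]
  refine ⟨second, fun lam X hX Y hY Z hZ => ?_⟩
  rw [first Y hY Z hZ, first X hX Y hY, first Z hZ X hX, second Y hY Z hZ, second X hX Y hY,
    second Z hZ X hX]
  ring
end
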